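/- Let n ≥ 1 and let P_G be a factorizing density with weight σ. Set m_σ(u) := ∫_{M₂(ℝ)} σ(z)·|det z|^{u−1} dz. Let s ∈ ℂⁿ be such that ∫_{M₂(ℝ)} σ(z)·|det z|^{Re(s_j)−n} dz < ∞ for every j, and assume 0 < m_σ(2j−1) < ∞ for j = 1,…,n. Then ∫ P_G(g) · (det g gᵀ)^{−(2n−1)/2} · Ψ_n(s, g gᵀ) dg = ∏_{j=1}^n m_σ(s_j − n + 1) / m_σ(2j−1), the integral on the left being over invertible g ∈ M_{2n}(ℝ) with respect to Lebesgue measure. -/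

import Mathlib

open MeasureTheory Matrix
open scoped BigOperators

noncomputable section

instance matrixMeasurableSpace {l : Type*} [Fintype l] : MeasurableSpace (Matrix l l ℝ) :=
  inferInstanceAs (MeasurableSpace (l → l → ℝ))

/-- The orthogonal group `O(m)` as a subtype of `m × m` real matrices. -/
abbrev OG (m : ℕ) := Matrix.orthogonalGroup (Fin m) ℝ

/-- `t ^ w` for a real `t ≥ 0` and complex `w`, with the convention `0 ^ w = 0`. -/
def cpw (t : ℝ) (w : ℂ) : ℂ := if t = 0 then 0 else Complex.exp (w * Real.log t)

/-- The `2n × 2n` real antisymmetric matrix `D(a) = diag(a₁ J, …, aₙ J)`,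
`J = [[0,1],[-1,0]]`. -/
def Dmat {n : ℕ} (a : Fin n → ℝ) : Matrix (Fin (2 * n)) (Fin (2 * n)) ℝ :=
  Matrix.of fun i j =>
    if i.val / 2 = j.val / 2 then
      a ⟨i.val / 2, by have := i.isLt; omega⟩ *
        (if i.val % 2 = 0 ∧ j.val % 2 = 1 then 1
          else if i.val % 2 = 1 ∧ j.val % 2 = 0 then -1 else 0)
    else 0

/-- Vandermonde product `Δ_m(x) = ∏_{j<k} (x_k - x_j)`. -/
def vdm {m : ℕ} {R : Type*} [CommRing R] (x : Fin m → R) : R :=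
  ∏ p ∈ Finset.univ.filter (fun p : Fin m × Fin m => p.1 < p.2), (x p.2 - x p.1)

/-- `s_{n+1} := -n-1` convention: the `j`-th exponent `(s_j - s_{j+1})/2 - 1`. -/
def expo (n : ℕ) (s : Fin n → ℂ) (j : Fin n) : ℂ :=
  (s j - (if h : j.val + 1 < n then s ⟨j.val + 1, h⟩ else -(n : ℂ) - 1)) / 2 - 1

/-- The spherical-type group integral
`f_n(s,X) = ∫_{O(2n)} ∏_j det((kXkᵀ)_{[2j]})^{(s_j-s_{j+1})/2-1} d*k`. -/
def sphInt (n : ℕ) (μ : Measure (OG (2 * n))) (s : Fin n → ℂ)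
    (X : Matrix (Fin (2 * n)) (Fin (2 * n)) ℝ) : ℂ :=
  ∫ k : OG (2 * n), ∏ j : Fin n,
    cpw ((((k : Matrix (Fin (2 * n)) (Fin (2 * n)) ℝ) * X *
        (k : Matrix (Fin (2 * n)) (Fin (2 * n)) ℝ)ᵀ).submatrix
          (Fin.castLE (by have := j.isLt; omega : 2 * (j.val + 1) ≤ 2 * n))
          (Fin.castLE (by have := j.isLt; omega : 2 * (j.val + 1) ≤ 2 * n))).det)
      (expo n s j) ∂μ


/-- The block lower-triangular matrix in `T` with `2×2` identity diagonal blocks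
built from its strictly-lower `2×2` blocks. -/
def Tmat {n : ℕ} (c : {ij : Fin n × Fin n // ij.2 < ij.1} → Fin 2 → Fin 2 → ℝ) :
    Matrix (Fin (2 * n)) (Fin (2 * n)) ℝ :=
  Matrix.of fun i j =>
    if h : j.val / 2 < i.val / 2 then
      c ⟨(⟨i.val / 2, by have := i.isLt; omega⟩, ⟨j.val / 2, by have := j.isLt; omega⟩),
          Fin.mk_lt_mk.mpr h⟩ ⟨i.val % 2, by omega⟩ ⟨j.val % 2, by omega⟩
    else if i.val / 2 = j.val / 2 then (if i.val % 2 = j.val % 2 then 1 else 0) else 0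

/-- The `2×2` block-diagonal matrix `diag(z₁,…,zₙ)` built from its blocks. -/
def Zmat {n : ℕ} (zc : Fin n → Fin 2 → Fin 2 → ℝ) : Matrix (Fin (2 * n)) (Fin (2 * n)) ℝ :=
  Matrix.of fun i j =>
    if i.val / 2 = j.val / 2 then
      zc ⟨i.val / 2, by have := i.isLt; omega⟩ ⟨i.val % 2, by omega⟩ ⟨j.val % 2, by omega⟩
    else 0

/-- A factorizing ensemble on `Gl_ℝ(2n)`: a `K`-bi-invariant probability density whose
block-triangular decomposition density factorizes with weight `σw`. -/
structure IsFactorizing (n : ℕ) (P : Matrix (Fin (2 * n)) (Fin (2 * n)) ℝ → ℝ)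
    (σw : Matrix (Fin 2) (Fin 2) ℝ → ℝ) : Prop where
  nonneg : ∀ g, 0 ≤ P g
  integrable : Integrable (fun u : Fin (2 * n) → Fin (2 * n) → ℝ => P (Matrix.of u))
  prob : (∫ u : Fin (2 * n) → Fin (2 * n) → ℝ, P (Matrix.of u)) = 1
  invariant : ∀ g, ∀ k₁ ∈ Matrix.orthogonalGroup (Fin (2 * n)) ℝ,
      ∀ k₂ ∈ Matrix.orthogonalGroup (Fin (2 * n)) ℝ, P (k₁ * g * k₂) = P g
  wnonneg : ∀ z, 0 ≤ σw z
  factor : ∀ᵐ zc : Fin n → Fin 2 → Fin 2 → ℝ,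
    (∏ j : Fin n, ((Matrix.of (zc j)) * (Matrix.of (zc j))ᵀ).det ^ (n - 1 - j.val)) *
        (∫ c : {ij : Fin n × Fin n // ij.2 < ij.1} → Fin 2 → Fin 2 → ℝ,
          P (Tmat c * Zmat zc)) =
      ∏ j : Fin n, σw (Matrix.of (zc j))

/-- Real Mellin transform of the induced determinant density,
`m_σ(u) = ∫_{M₂(ℝ)} σ(z) |det z|^{u-1} dz`, for real `u`. -/
def mSigR (σw : Matrix (Fin 2) (Fin 2) ℝ → ℝ) (u : ℝ) : ℝ :=
  ∫ z : Fin 2 → Fin 2 → ℝ, σw (Matrix.of z) * |(Matrix.of z).det| ^ (u - 1)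

/-- Complex version of `m_σ(u) = ∫_{M₂(ℝ)} σ(z) |det z|^{u-1} dz`. -/
def mSigC (σw : Matrix (Fin 2) (Fin 2) ℝ → ℝ) (u : ℂ) : ℂ :=
  ∫ z : Fin 2 → Fin 2 → ℝ, (σw (Matrix.of z) : ℂ) * cpw |(Matrix.of z).det| (u - 1)

/-!
Write an invertible `g` as `t * z * k` with `t` block lower unipotent, `z` block diagonal and `k`
orthogonal. A density `P` and a function `φ` that are right invariant under the orthogonal group
and, in the case of `φ`, left invariant under the unipotent matrices satisfy
`C * ∫ P φ = ∫ J(z)² (∫ P(t z) dt) φ(z) dz` with a constant `C` that depends neither on `P` nor on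
`φ`. Here `J(z)` is the factor in the definition of a factorizing density, so the measure on the
right is the product of the measures `σ(z_j) |det z_j| ^ (2 (n - j)) dz_j`; taking `φ = 1` shows
that `C` is `∏ m_σ(2 j - 1)`.

By bi-invariance of `P` the average over the orthogonal group in `Ψ` may be dropped, which leaves
`φ(g) = det(g gᵀ) ^ (-(2 n - 1) / 2) ∏ det((g gᵀ)_{[2 j]}) ^ ((s_j - s_{j+1}) / 2 - 1)`.
On block diagonal matrices each minor is a product of the `det(z_i)²` with `i ≤ j`, so the exponents
telescope and the integral over `z` splits into the factors `m_σ(s_j - n + 1)`.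

The integral formula is obtained without a Haar measure on the orthogonal group: integrating
over a full matrix and a block triangular one simultaneously, two ways of substituting compare
Lebesgue measure on all matrices with that on the block triangular ones.
-/

open scoped ENNReal

theorem det_blockDiagonal'_eq_prod {R ι : Type*} [CommRing R] [Fintype ι] [LinearOrder ι]
    {κ : ι → Type*} [∀ i, Fintype (κ i)] [∀ i, DecidableEq (κ i)]
    (M : ∀ i, Matrix (κ i) (κ i) R) :
    (Matrix.blockDiagonal' M).det = ∏ i, (M i).det := by
  rw [(Matrix.blockTriangular_blockDiagonal' M).det_fintype]
  refine Finset.prod_congr rfl fun i _ => ?_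
  rw [← Matrix.det_submatrix_equiv_self (Equiv.sigmaSubtype i).symm]
  congr 1
  ext a b
  simp [Matrix.toSquareBlock_def, Equiv.sigmaSubtype, Matrix.blockDiagonal'_apply]

section PatternMatrices

variable {m : Type*}

/-- The possible entries of an `m × m` matrix at the positions `(i, j)` allowed by a pattern `r`;
they coordinatise the space of matrices supported on `r`. -/
abbrev PatternEntries (r : m → m → Prop) : Type _ := {p : m × m // r p.1 p.2} → ℝ

/-- The matrix supported on the pattern `r` with prescribed entries there. -/
def patternMatrix (r : m → m → Prop) [DecidableRel r] : PatternEntries r →ₗ[ℝ] Matrix m m ℝ where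
  toFun x := Matrix.of fun i j => if h : r i j then x ⟨(i, j), h⟩ else 0
  map_add' x y := by
    ext i j
    by_cases h : r i j <;> simp [h]
  map_smul' c x := by
    ext i j
    by_cases h : r i j <;> simp [h]

/-- Restriction of a matrix to the positions allowed by the pattern `r`. -/
def patternRestrict (r : m → m → Prop) : Matrix m m ℝ →ₗ[ℝ] PatternEntries r where
  toFun M p := M p.1.1 p.1.2
  map_add' _ _ := rfl
  map_smul' _ _ := rfl

theorem patternRestrict_apply (r : m → m → Prop) (M : Matrix m m ℝ) (p : {p : m × m // r p.1 p.2}) :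
    patternRestrict r M p = M p.1.1 p.1.2 :=
  rfl

variable {r : m → m → Prop} [DecidableRel r]

theorem patternMatrix_apply (x : PatternEntries r) (i j : m) :
    patternMatrix r x i j = if h : r i j then x ⟨(i, j), h⟩ else 0 :=
  rfl

theorem patternMatrix_apply_of_not (x : PatternEntries r) {i j : m} (h : ¬ r i j) :
    patternMatrix r x i j = 0 :=
  dif_neg h

theorem patternRestrict_patternMatrix (x : PatternEntries r) :
    patternRestrict r (patternMatrix r x) = x :=
  funext fun p => dif_pos p.2

theorem patternMatrix_patternRestrict {M : Matrix m m ℝ} (hM : ∀ i j, ¬ r i j → M i j = 0) :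
    patternMatrix r (patternRestrict r M) = M := by
  ext i j
  by_cases h : r i j
  · exact dif_pos h
  · rw [patternMatrix_apply_of_not _ h, hM i j h]

theorem patternMatrix_injective : Function.Injective (patternMatrix r) :=
  Function.LeftInverse.injective patternRestrict_patternMatrix

variable [Fintype m] (r)

/-- Right multiplication by `A`, compressed to the matrices supported on the pattern `r`. -/
def patternMulRight (A : Matrix m m ℝ) : PatternEntries r →ₗ[ℝ] PatternEntries r :=
  patternRestrict r ∘ₗ LinearMap.mulRight ℝ A ∘ₗ patternMatrix r

/-- Left multiplication by `A`, compressed to the matrices supported on the pattern `r`. -/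
def patternMulLeft (A : Matrix m m ℝ) : PatternEntries r →ₗ[ℝ] PatternEntries r :=
  patternRestrict r ∘ₗ LinearMap.mulLeft ℝ A ∘ₗ patternMatrix r

variable {r} in
theorem patternMatrix_patternMulRight {A : Matrix m m ℝ}
    (hA : ∀ i j k, r i j → ¬ r i k → A j k = 0) (x : PatternEntries r) :
    patternMatrix r (patternMulRight r A x) = patternMatrix r x * A := by
  refine patternMatrix_patternRestrict (M := patternMatrix r x * A) fun i k hik =>
    Finset.sum_eq_zero fun j _ => ?_
  by_cases hij : r i j
  · exact mul_eq_zero_of_right _ (hA i j k hij hik)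
  · exact mul_eq_zero_of_left (patternMatrix_apply_of_not x hij) _

variable {r} in
theorem patternMatrix_patternMulLeft {A : Matrix m m ℝ}
    (hA : ∀ i j k, r j k → ¬ r i k → A i j = 0) (x : PatternEntries r) :
    patternMatrix r (patternMulLeft r A x) = A * patternMatrix r x := by
  refine patternMatrix_patternRestrict (M := A * patternMatrix r x) fun i k hik =>
    Finset.sum_eq_zero fun j _ => ?_
  by_cases hjk : r j k
  · exact mul_eq_zero_of_left (hA i j k hjk hik) _
  · exact mul_eq_zero_of_right _ (patternMatrix_apply_of_not x hjk)

theorem patternMulRight_apply (A : Matrix m m ℝ) (x : PatternEntries r)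
    (p : {p : m × m // r p.1 p.2}) :
    patternMulRight r A x p = ∑ k : {k // r p.1.1 k}, x ⟨(p.1.1, k), k.2⟩ * A k p.1.2 := by
  change ∑ k, patternMatrix r x p.1.1 k * A k p.1.2 = _
  rw [← Fintype.sum_subtype_add_sum_subtype (fun k => r p.1.1 k),
    Finset.sum_eq_zero fun k (_ : k ∈ (Finset.univ : Finset {k // ¬ r p.1.1 k})) => ?_, add_zero]
  · exact Finset.sum_congr rfl fun k _ => by rw [patternMatrix_apply, dif_pos k.2]
  · rw [patternMatrix_apply_of_not x k.2, zero_mul]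

theorem det_patternMulRight [LinearOrder m] (A : Matrix m m ℝ) :
    LinearMap.det (patternMulRight r A) = ∏ i, (A.toSquareBlockProp (r i)).det := by
  let e := Equiv.subtypeProdEquivSigmaSubtype r
  let D := Matrix.blockDiagonal' fun i => (A.toSquareBlockProp (r i))ᵀ
  have key : patternMulRight r A = Matrix.toLin' (D.submatrix e e) := by
    refine LinearMap.ext fun x => funext fun p => ?_
    rw [patternMulRight_apply, Matrix.toLin'_apply, Matrix.mulVec, dotProduct,
      ← e.symm.sum_comp, Fintype.sum_sigma, Finset.sum_eq_single p.1.1]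
    · refine Finset.sum_congr rfl fun k _ => ?_
      simp [D, e, Equiv.subtypeProdEquivSigmaSubtype, Matrix.toSquareBlockProp_def, mul_comm]
    · intro i _ hi
      simp [D, e, Equiv.subtypeProdEquivSigmaSubtype, Matrix.blockDiagonal'_apply, Ne.symm hi]
    · simp
  rw [key, LinearMap.det_toLin', Matrix.det_submatrix_equiv_self, det_blockDiagonal'_eq_prod]
  simp only [Matrix.det_transpose]

theorem det_patternMulLeft [LinearOrder m] (A : Matrix m m ℝ) :
    LinearMap.det (patternMulLeft r A) = ∏ j, (A.toSquareBlockProp fun i => r i j).det := by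
  let e : PatternEntries r ≃ₗ[ℝ] PatternEntries (Function.swap r) :=
    LinearEquiv.funCongrLeft ℝ ℝ
      ((Equiv.prodComm m m).subtypeEquiv fun _ => Iff.rfl)
  have key : e.toLinearMap ∘ₗ patternMulLeft r A ∘ₗ e.symm.toLinearMap =
      patternMulRight (Function.swap r) Aᵀ := by
    refine LinearMap.ext fun x => funext fun p => ?_
    exact Finset.sum_congr rfl fun k _ => mul_comm _ _
  rw [← LinearMap.det_conj _ e, key, det_patternMulRight]
  exact Finset.prod_congr rfl fun j _ => Matrix.det_transpose (A.toSquareBlockProp fun i => r i j)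

end PatternMatrices

section RowVolume

theorem toSquareBlockProp_mul_of_lower {m R : Type*} [Fintype m] [CommRing R] {p : m → Prop}
    [DecidablePred p] {A : Matrix m m R}
    (hA : ∀ i, p i → ∀ j, ¬ p j → A i j = 0) (B : Matrix m m R) :
    (A * B).toSquareBlockProp p = A.toSquareBlockProp p * B.toSquareBlockProp p := by
  have h : (A.toBlock p fun j => ¬ p j) = 0 := Matrix.ext fun i j => hA i i.2 j j.2
  rw [Matrix.toSquareBlockProp, Matrix.toBlock_mul_eq_add p p, h, Matrix.zero_mul, add_zero]
  rfl

variable {m : Type*} [Fintype m] [DecidableEq m]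

theorem posDef_mul_transpose_self {g : Matrix m m ℝ} (hg : g.det ≠ 0) : (g * gᵀ).PosDef := by
  simpa [Matrix.conjTranspose_eq_transpose_of_trivial] using
    Matrix.PosDef.one.mul_mul_conjTranspose_same (B := g)
      (Matrix.vecMul_injective_of_isUnit ((Matrix.isUnit_iff_isUnit_det g).2 hg.isUnit))

/-- The volume of the parallelepiped spanned by those rows of `g` whose index satisfies `p`,
computed as the square root of a Gram determinant. -/
def rowVolume (p : m → Prop) [DecidablePred p] (g : Matrix m m ℝ) : ℝ :=
  √((g * gᵀ).toSquareBlockProp p).det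

variable {p : m → Prop} [DecidablePred p]

theorem rowVolume_pos {g : Matrix m m ℝ} (hg : g.det ≠ 0) : 0 < rowVolume p g :=
  Real.sqrt_pos.2 ((posDef_mul_transpose_self hg).submatrix Subtype.val_injective).det_pos

theorem rowVolume_one : rowVolume p (1 : Matrix m m ℝ) = 1 := by
  have : (1 : Matrix m m ℝ).toSquareBlockProp p = 1 :=
    Matrix.submatrix_one _ Subtype.val_injective
  rw [rowVolume, Matrix.transpose_one, Matrix.mul_one, this, Matrix.det_one, Real.sqrt_one]

theorem rowVolume_sq (g : Matrix m m ℝ) :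
    rowVolume p g ^ 2 = ((g * gᵀ).toSquareBlockProp p).det := by
  refine Real.sq_sqrt ?_
  have h : (g * gᵀ).PosSemidef := by
    simpa [Matrix.conjTranspose_eq_transpose_of_trivial] using
      Matrix.posSemidef_self_mul_conjTranspose g
  exact (h.submatrix _).det_nonneg

theorem continuous_rowVolume : Continuous (rowVolume p : Matrix m m ℝ → ℝ) :=
  ((continuous_id.mul continuous_id.matrix_transpose).matrix_submatrix _ _).matrix_det.sqrt

theorem rowVolume_mul_of_lower {A : Matrix m m ℝ} (hA : ∀ i, p i → ∀ j, ¬ p j → A i j = 0)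
    (g : Matrix m m ℝ) :
    rowVolume p (A * g) = |(A.toSquareBlockProp p).det| * rowVolume p g := by
  have h : (A * g * (A * g)ᵀ).toSquareBlockProp p =
      A.toSquareBlockProp p * (g * gᵀ).toSquareBlockProp p * (A.toSquareBlockProp p)ᵀ := by
    have h₁ : (A * g * (A * g)ᵀ).toSquareBlockProp p =
        A.toSquareBlockProp p * (g * gᵀ * Aᵀ).toSquareBlockProp p := by
      rw [← toSquareBlockProp_mul_of_lower hA, Matrix.transpose_mul, Matrix.mul_assoc,
        Matrix.mul_assoc]
    have h₂ : (g * gᵀ * Aᵀ).toSquareBlockProp p =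
        ((A * (g * gᵀ)).toSquareBlockProp p)ᵀ := by
      simp only [Matrix.toSquareBlockProp, Matrix.toBlock, Matrix.transpose_submatrix,
        Matrix.transpose_mul, Matrix.transpose_transpose]
    rw [h₁, h₂, toSquareBlockProp_mul_of_lower hA, Matrix.transpose_mul, Matrix.mul_assoc]
    simp only [Matrix.toSquareBlockProp, Matrix.toBlock, Matrix.transpose_submatrix,
      Matrix.transpose_mul, Matrix.transpose_transpose]
  rw [rowVolume, h, Matrix.det_mul, Matrix.det_mul, Matrix.det_transpose, mul_right_comm, ← sq,
    Real.sqrt_mul (sq_nonneg _), Real.sqrt_sq_eq_abs, rowVolume]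

theorem rowVolume_of_lower {A : Matrix m m ℝ} (hA : ∀ i, p i → ∀ j, ¬ p j → A i j = 0) :
    rowVolume p A = |(A.toSquareBlockProp p).det| := by
  simpa [rowVolume_one] using rowVolume_mul_of_lower hA 1

/-- Functions on matrices that are invariant under right multiplication by the orthogonal
group. -/
def IsRightOrthInvariant {β : Type*} (F : Matrix m m ℝ → β) : Prop :=
  ∀ g, ∀ k ∈ Matrix.orthogonalGroup m ℝ, F (g * k) = F g

theorem IsRightOrthInvariant.mul_enorm {F : Matrix m m ℝ → ℝ≥0∞} {r : Matrix m m ℝ → ℝ}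
    (hF : IsRightOrthInvariant F) (hr : IsRightOrthInvariant r) :
    IsRightOrthInvariant fun g => F g * ‖r g‖ₑ := fun g k hk =>
  congrArg₂ (fun x y => x * ‖y‖ₑ) (hF g k hk) (hr g k hk)

theorem isRightOrthInvariant_mul_transpose :
    IsRightOrthInvariant fun g : Matrix m m ℝ => g * gᵀ := by
  intro g k hk
  have h : k * kᵀ = 1 := (Matrix.mem_orthogonalGroup_iff m ℝ).1 hk
  change g * k * (g * k)ᵀ = g * gᵀ
  rw [Matrix.transpose_mul, Matrix.mul_assoc, ← Matrix.mul_assoc k, h, Matrix.one_mul]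

theorem isRightOrthInvariant_rowVolume :
    IsRightOrthInvariant (rowVolume p : Matrix m m ℝ → ℝ) := fun g k hk =>
  congrArg (fun S : Matrix m m ℝ => √(S.toSquareBlockProp p).det)
    (isRightOrthInvariant_mul_transpose g k hk)

theorem isRightOrthInvariant_abs_det :
    IsRightOrthInvariant fun g : Matrix m m ℝ => |g.det| := by
  intro g k hk
  have h : k.det * k.det = 1 := by
    simpa [Matrix.star_eq_conjTranspose] using
      congrArg Matrix.det ((Matrix.mem_orthogonalGroup_iff m ℝ).1 hk)
  change |(g * k).det| = |g.det|
  rw [Matrix.det_mul, abs_mul, (abs_eq zero_le_one).2 (mul_self_eq_one_iff.1 h), mul_one]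

end RowVolume

section Iwasawa

variable {m : Type*} [Fintype m] [LinearOrder m] [LocallyFiniteOrderBot m]
  {ι : Type*} [LinearOrder ι] {b : m → ι}

theorem exists_lowerTriangular_mul_mem_orthogonalGroup {g : Matrix m m ℝ} (hg : g.det ≠ 0) :
    ∃ V : Matrix m m ℝ, V.BlockTriangular OrderDual.toDual ∧ V.det ≠ 0 ∧
      V * g ∈ Matrix.orthogonalGroup m ℝ := by
  have hS := posDef_mul_transpose_self hg
  set U := LDL.lowerInv hS
  have hU : IsUnit U := isUnit_of_invertible U
  have hD : Matrix.diagonal (LDL.diagEntries hS) = U * (g * gᵀ) * Uᵀ :=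
    LDL.diag_eq_lowerInv_conj hS
  have hd : ∀ i, 0 < LDL.diagEntries hS i := fun i => by
    have := (hS.mul_mul_conjTranspose_same (Matrix.vecMul_injective_of_isUnit hU)).diag_pos (i := i)
    rwa [Matrix.conjTranspose_eq_transpose_of_trivial, ← hD, Matrix.diagonal_apply_eq] at this
  set E := Matrix.diagonal fun i => (√(LDL.diagEntries hS i))⁻¹
  refine ⟨E * U, (Matrix.blockTriangular_diagonal _).mul fun i j hij =>
    LDL.lowerInv_triangular hS hij, ?_, ?_⟩
  · rw [Matrix.det_mul, Matrix.det_diagonal]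
    exact mul_ne_zero (Finset.prod_ne_zero_iff.2 fun i _ =>
      inv_ne_zero (Real.sqrt_pos.2 (hd i)).ne') ((Matrix.isUnit_iff_isUnit_det U).1 hU).ne_zero
  · have h : E * U * g * (E * U * g)ᵀ = E * (U * (g * gᵀ) * Uᵀ) * E := by
      simp only [E, Matrix.transpose_mul, Matrix.diagonal_transpose, Matrix.mul_assoc]
    rw [Matrix.mem_orthogonalGroup_iff]
    change E * U * g * (E * U * g)ᵀ = 1
    rw [h, ← hD, Matrix.diagonal_mul_diagonal, Matrix.diagonal_mul_diagonal, ← Matrix.diagonal_one]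
    congr 1
    ext i
    rw [mul_right_comm, ← mul_inv, Real.mul_self_sqrt (hd i).le, inv_mul_cancel₀ (hd i).ne']

theorem exists_blockLowerTriangular_mul_orthogonal (hb : Monotone b) {g : Matrix m m ℝ}
    (hg : g.det ≠ 0) :
    ∃ R : Matrix m m ℝ, R.BlockTriangular (OrderDual.toDual ∘ b) ∧
      ∃ k ∈ Matrix.orthogonalGroup m ℝ, g = R * k := by
  obtain ⟨V, hVtri, hVdet, hVg⟩ := exists_lowerTriangular_mul_mem_orthogonalGroup hg
  have hVb : V.BlockTriangular (OrderDual.toDual ∘ b) := fun i j hij =>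
    hVtri (hb.reflect_lt hij)
  have := Matrix.invertibleOfIsUnitDet V hVdet.isUnit
  exact ⟨V⁻¹, Matrix.blockTriangular_inv_of_blockTriangular hVb, V * g, hVg, by
    rw [← Matrix.mul_assoc, Matrix.nonsing_inv_mul V hVdet.isUnit, Matrix.one_mul]⟩

end Iwasawa

section Flags

variable {m : Type*} {ι : Type*} [LinearOrder ι] (b : m → ι)

/-- The pattern of block lower triangular matrices, the blocks being the fibres of `b`. -/
abbrev blockLE : m → m → Prop := fun i j => b j ≤ b i

/-- The pattern of strictly block lower triangular matrices. -/
abbrev blockLT : m → m → Prop := fun i j => b j < b i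

/-- The pattern of block diagonal matrices. -/
abbrev blockEQ : m → m → Prop := fun i j => b j = b i

variable {b} in
theorem blockTriangular_patternMatrix_blockEQ (z : PatternEntries (blockEQ b)) :
    (patternMatrix _ z).BlockTriangular (OrderDual.toDual ∘ b) := fun _ _ hij =>
  patternMatrix_apply_of_not z (ne_of_gt hij)

/-- Splitting of the entries of a block triangular matrix into the strictly triangular and the
block diagonal ones. -/
def blockTriangularEquiv :
    (PatternEntries (blockLT b) × PatternEntries (blockEQ b)) ≃ₗ[ℝ] PatternEntries (blockLE b) :=
  LinearEquiv.ofLinearMap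
    (patternRestrict _ ∘ₗ (patternMatrix (blockLT b)).coprod (patternMatrix (blockEQ b)))
    (((patternRestrict _).prod (patternRestrict _)) ∘ₗ patternMatrix (blockLE b))
    (LinearMap.ext fun x => funext fun p => by
      obtain h | h := lt_or_eq_of_le (show b p.1.2 ≤ b p.1.1 from p.2)
      · simp [patternRestrict_apply, patternMatrix_apply, h, h.le, h.ne]
      · simp [patternRestrict_apply, patternMatrix_apply, h])
    (LinearMap.ext fun q => Prod.ext
      (funext fun p => by
        simp [patternRestrict_apply, patternMatrix_apply, p.2, p.2.le, p.2.ne])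
      (funext fun p => by
        simp [patternRestrict_apply, patternMatrix_apply, p.2]))

variable {b} in
theorem patternMatrix_blockTriangularEquiv
    (q : PatternEntries (blockLT b) × PatternEntries (blockEQ b)) :
    patternMatrix _ (blockTriangularEquiv b q) = patternMatrix _ q.1 + patternMatrix _ q.2 := by
  refine patternMatrix_patternRestrict (M := patternMatrix _ q.1 + patternMatrix _ q.2)
    fun i j hij => ?_
  rw [Matrix.add_apply, patternMatrix_apply_of_not _ fun h => hij h.le,
    patternMatrix_apply_of_not _ fun h => hij h.le, add_zero]

variable [DecidableEq m]

variable {b} in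
/-- The block lower triangular matrix with identity diagonal blocks and prescribed entries in the
strictly lower blocks. -/
def unipotentMatrix (y : PatternEntries (blockLT b)) : Matrix m m ℝ := 1 + patternMatrix _ y

variable {b} in
theorem unipotentMatrix_apply_of_ne (y : PatternEntries (blockLT b)) {i j : m} (hij : i ≠ j) :
    unipotentMatrix y i j = patternMatrix _ y i j := by
  rw [unipotentMatrix, Matrix.add_apply, Matrix.one_apply_ne hij, zero_add]

variable [Fintype m]

/-- The product over all rows `i` of the volumes spanned by the rows in the block of `i` or an
earlier one. It is the modulus of right multiplication on block lower triangular matrices. -/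
def flagVolume (g : Matrix m m ℝ) : ℝ := ∏ i, rowVolume (blockLE b i) g

/-- The product over all rows `i` of the volumes spanned by the rows in blocks strictly before
that of `i`. It is the modulus of right multiplication on strictly block lower triangular
matrices. -/
def strictFlagVolume (g : Matrix m m ℝ) : ℝ := ∏ i, rowVolume (blockLT b i) g

theorem flagVolume_pos {g : Matrix m m ℝ} (hg : g.det ≠ 0) : 0 < flagVolume b g :=
  Finset.prod_pos fun _ _ => rowVolume_pos hg

theorem strictFlagVolume_pos {g : Matrix m m ℝ} (hg : g.det ≠ 0) : 0 < strictFlagVolume b g :=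
  Finset.prod_pos fun _ _ => rowVolume_pos hg

theorem continuous_flagVolume : Continuous (flagVolume b) :=
  continuous_finsetProd _ fun _ _ => continuous_rowVolume

theorem continuous_strictFlagVolume : Continuous (strictFlagVolume b) :=
  continuous_finsetProd _ fun _ _ => continuous_rowVolume

theorem isRightOrthInvariant_flagVolume : IsRightOrthInvariant (flagVolume b) := fun g k hk =>
  Finset.prod_congr rfl fun _ _ => isRightOrthInvariant_rowVolume g k hk

theorem isRightOrthInvariant_strictFlagVolume : IsRightOrthInvariant (strictFlagVolume b) :=
  fun g k hk => Finset.prod_congr rfl fun _ _ => isRightOrthInvariant_rowVolume g k hk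

end Flags

section TriangularModuli

variable {m : Type*} [Fintype m] {ι : Type*} [LinearOrder ι] {b : m → ι}
  {R : Matrix m m ℝ} (hR : R.BlockTriangular (OrderDual.toDual ∘ b))
include hR

theorem patternMatrix_patternMulRight_blockLE (x : PatternEntries (blockLE b)) :
    patternMatrix _ (patternMulRight _ R x) = patternMatrix _ x * R :=
  patternMatrix_patternMulRight (fun _ j k hij hik => @hR j k (hij.trans_lt (not_le.1 hik))) x

theorem patternMatrix_patternMulLeft_blockLE (x : PatternEntries (blockLE b)) :
    patternMatrix _ (patternMulLeft _ R x) = R * patternMatrix _ x :=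
  patternMatrix_patternMulLeft (fun i j k (hjk : b k ≤ b j) hik =>
    @hR i j (hjk.trans_lt' (not_le.1 hik))) x

theorem patternMatrix_patternMulRight_blockLT (x : PatternEntries (blockLT b)) :
    patternMatrix _ (patternMulRight _ R x) = patternMatrix _ x * R :=
  patternMatrix_patternMulRight (fun _ j k hij hik => @hR j k (hij.trans_le (not_lt.1 hik))) x

theorem abs_det_patternMulRight_blockLE [LinearOrder m] :
    |LinearMap.det (patternMulRight (blockLE b) R)| = flagVolume b R := by
  rw [det_patternMulRight, Finset.abs_prod]
  exact Finset.prod_congr rfl fun i _ => (rowVolume_of_lower fun _ hj _ hk =>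
    hR (hj.trans_lt (not_le.1 hk))).symm

theorem abs_det_patternMulRight_blockLT [LinearOrder m] :
    |LinearMap.det (patternMulRight (blockLT b) R)| = strictFlagVolume b R := by
  rw [det_patternMulRight, Finset.abs_prod]
  exact Finset.prod_congr rfl fun i _ => (rowVolume_of_lower fun _ hj _ hk =>
    hR (hj.trans_le (not_lt.1 hk))).symm

theorem strictFlagVolume_mul_abs_det_patternMulLeft [LinearOrder m] :
    strictFlagVolume b R * |LinearMap.det (patternMulLeft (blockLE b) R)| =
      |R.det| ^ Fintype.card m := by
  rw [det_patternMulLeft, Finset.abs_prod, strictFlagVolume, ← Finset.prod_mul_distrib]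
  refine (Finset.prod_congr rfl fun i _ => ?_).trans (Finset.prod_const _)
  have hlow : ∀ j, blockLT b i j → ∀ k, ¬ blockLT b i k → R j k = 0 := fun _ hj _ hk =>
    hR (hj.trans_le (not_lt.1 hk))
  rw [R.twoBlockTriangular_det' (blockLT b i) hlow, abs_mul, rowVolume_of_lower hlow]
  congr 2
  exact Matrix.equiv_block_det R fun _ => not_lt

end TriangularModuli

section LinearChangeOfVariables

variable {E E' : Type*} [NormedAddCommGroup E] [NormedSpace ℝ E] [FiniteDimensional ℝ E]
  [MeasurableSpace E] [BorelSpace E] (μ : Measure E) [μ.IsAddHaarMeasure]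
  [NormedAddCommGroup E'] [NormedSpace ℝ E'] [FiniteDimensional ℝ E'] [MeasurableSpace E']
  [BorelSpace E'] (ν : Measure E') [ν.IsAddHaarMeasure]

theorem enorm_det_mul_lintegral_comp_linearMap {f : E →ₗ[ℝ] E} (hf : LinearMap.det f ≠ 0)
    (F : E → ℝ≥0∞) : ‖LinearMap.det f‖ₑ * ∫⁻ x, F (f x) ∂μ = ∫⁻ x, F x ∂μ := by
  have hemb : MeasurableEmbedding f :=
    (LinearMap.equivOfDetNeZero f hf).toContinuousLinearEquiv.toHomeomorph.measurableEmbedding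
  rw [← hemb.lintegral_map, Measure.map_linearMap_addHaar_eq_smul_addHaar μ hf,
    lintegral_smul_measure, smul_eq_mul, ← mul_assoc, Real.enorm_eq_ofReal_abs,
    ← ENNReal.ofReal_mul (abs_nonneg _), ← abs_mul, mul_inv_cancel₀ hf, abs_one,
    ENNReal.ofReal_one, one_mul]

theorem exists_map_linearEquiv_addHaar_eq_smul (e : E ≃ₗ[ℝ] E') :
    ∃ κ : ℝ≥0∞, κ ≠ 0 ∧ κ ≠ ∞ ∧ μ.map e = κ • ν := by
  have : (μ.map e).IsAddHaarMeasure := e.toContinuousLinearEquiv.isAddHaarMeasure_map μ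
  refine ⟨Measure.addHaarScalarFactor (μ.map e) ν, ?_, ENNReal.coe_ne_top, ?_⟩
  · exact_mod_cast (Measure.addHaarScalarFactor_pos_of_isAddHaarMeasure (μ.map e) ν).ne'
  · exact Measure.isAddLeftInvariant_eq_smul _ _

theorem exists_lintegral_comp_linearEquiv_eq_mul (e : E ≃ₗ[ℝ] E') :
    ∃ κ : ℝ≥0∞, κ ≠ 0 ∧ κ ≠ ∞ ∧
      ∀ F : E' → ℝ≥0∞, ∫⁻ x, F (e x) ∂μ = κ * ∫⁻ y, F y ∂ν := by
  obtain ⟨κ, h₀, h_top, hκ⟩ := exists_map_linearEquiv_addHaar_eq_smul μ ν e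
  refine ⟨κ, h₀, h_top, fun F => ?_⟩
  have hemb : MeasurableEmbedding e :=
    e.toContinuousLinearEquiv.toHomeomorph.measurableEmbedding
  rw [← hemb.lintegral_map, hκ, lintegral_smul_measure, smul_eq_mul]

theorem quasiMeasurePreserving_linearEquiv (e : E ≃ₗ[ℝ] E') :
    Measure.QuasiMeasurePreserving e μ ν := by
  obtain ⟨κ, -, -, hκ⟩ := exists_map_linearEquiv_addHaar_eq_smul μ ν e
  refine ⟨e.toContinuousLinearEquiv.continuous.measurable, ?_⟩
  rw [hκ]
  exact Measure.smul_absolutelyContinuous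

/- For fixed `x`, the function `t ↦ det (B x + t)` is a characteristic polynomial, so it has
finitely many zeros; translation invariance in the direction `e` and Fubini conclude. -/
theorem ae_det_ne_zero {m : Type*} [Fintype m] [DecidableEq m] (B : E →ₗ[ℝ] Matrix m m ℝ)
    {e : E} (he : B e = 1) : ∀ᵐ x ∂μ, (B x).det ≠ 0 := by
  let N : Set E := {x | (B x).det = 0}
  have hN : MeasurableSet N :=
    (isClosed_eq (LinearMap.continuous_of_finiteDimensional B).matrix_det
      continuous_const).measurableSet
  have hNe : MeasurableSet {q : E × ℝ | q.1 + q.2 • e ∈ N} :=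
    (measurable_fst.add (measurable_snd.smul_const e)) hN
  have h_line : ∀ x, volume {t : ℝ | x + t • e ∈ N} = 0 := fun x => by
    refine ((Polynomial.finite_setOfPred_isRoot
      (-(B x)).charpoly_monic.ne_zero).subset fun t ht => ?_).measure_zero _
    rw [Set.mem_ofPred_eq, Polynomial.IsRoot, Matrix.eval_charpoly, sub_neg_eq_add, add_comm]
    rw [Set.mem_ofPred_eq, Set.mem_ofPred_eq, map_add, map_smul, he] at ht
    rwa [Matrix.smul_one_eq_diagonal] at ht
  have h_prod : (μ.prod volume) {q : E × ℝ | q.1 + q.2 • e ∈ N} = 0 := by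
    simp only [Measure.prod_apply hNe, Set.preimage_ofPred_eq, h_line, lintegral_zero]
  have h_trans : ∀ t : ℝ, μ {x | x + t • e ∈ N} = μ N := fun t =>
    measure_preimage_add_right μ (t • e) N
  simp only [Measure.prod_apply_symm hNe, Set.preimage_ofPred_eq, h_trans, lintegral_const,
    Real.volume_univ, mul_eq_zero, ENNReal.top_ne_zero, or_false] at h_prod
  exact measure_eq_zero_iff_ae_notMem.1 h_prod

end LinearChangeOfVariables

section MatrixMeasure

variable {m : Type*} [Fintype m]

/-- Lebesgue measure on the entries. -/
instance : MeasureSpace (Matrix m m ℝ) where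
  volume := (volume : Measure (m → m → ℝ))

instance : BorelSpace (Matrix m m ℝ) :=
  inferInstanceAs (BorelSpace (m → m → ℝ))

instance {ι : Type*} [Countable ι] : SecondCountableTopology (Matrix ι ι ℝ) :=
  inferInstanceAs (SecondCountableTopology (ι → ι → ℝ))

instance : SigmaFinite (volume : Measure (Matrix m m ℝ)) :=
  inferInstanceAs (SigmaFinite (volume : Measure (m → m → ℝ)))

instance {ι κ : Type*} [Fintype ι] [Fintype κ] :
    (volume : Measure ((ι → ℝ) × (κ → ℝ))).IsAddHaarMeasure :=
  Measure.prod.instIsAddHaarMeasure (volume : Measure (ι → ℝ)) (volume : Measure (κ → ℝ))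

instance {ι κ : Type*} [Fintype ι] [Fintype κ] :
    (volume : Measure (ι → κ → ℝ)).IsAddHaarMeasure :=
  Measure.pi.isAddHaarMeasure _

instance : (volume : Measure (Matrix m m ℝ)).IsAddHaarMeasure :=
  inferInstanceAs (volume : Measure (m → m → ℝ)).IsAddHaarMeasure

instance {ι κ τ : Type*} [Fintype ι] [Fintype κ] [Fintype τ] :
    (volume : Measure (ι → κ → τ → ℝ)).IsAddHaarMeasure :=
  Measure.pi.isAddHaarMeasure _

variable [DecidableEq m]

theorem measurable_matrix_inv : Measurable fun g : Matrix m m ℝ => g⁻¹ := by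
  have : (fun g : Matrix m m ℝ => g⁻¹) = fun g => (g.det)⁻¹ • g.adjugate :=
    funext fun g => by rw [Matrix.inv_def, Ring.inverse_eq_inv']
  rw [this]
  exact (continuous_id.matrix_det.measurable.inv).smul continuous_id.matrix_adjugate.measurable

theorem det_mulLeft_matrix (c : Matrix m m ℝ) :
    LinearMap.det (LinearMap.mulLeft ℝ c) = c.det ^ Fintype.card m := by
  rw [← LinearMap.det_conj (LinearMap.mulLeft ℝ c) (Matrix.transposeLinearEquiv m m ℝ ℝ)]
  refine (LinearMap.det_pi fun _ : m => Matrix.toLin' c).trans ?_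
  rw [Finset.prod_const, LinearMap.det_toLin', Finset.card_univ]

theorem det_mulLeft_matrix_ne_zero {c : Matrix m m ℝ} (hc : c.det ≠ 0) :
    LinearMap.det (LinearMap.mulLeft ℝ c) ≠ 0 := by
  rw [det_mulLeft_matrix]
  exact pow_ne_zero _ hc

theorem enorm_det_pow_mul_lintegral_mul_left {c : Matrix m m ℝ} (hc : c.det ≠ 0)
    (F : Matrix m m ℝ → ℝ≥0∞) :
    ‖c.det‖ₑ ^ Fintype.card m * ∫⁻ g, F (c * g) = ∫⁻ g, F g := by
  rw [← enorm_pow, ← det_mulLeft_matrix]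
  exact enorm_det_mul_lintegral_comp_linearMap (E := m → m → ℝ) volume
    (det_mulLeft_matrix_ne_zero hc) F

theorem lintegral_mul_comp_mul_left {c : Matrix m m ℝ} (hc : c.det ≠ 0)
    (w Φ : Matrix m m ℝ → ℝ≥0∞) :
    ∫⁻ u, w u * Φ (c * u) = ∫⁻ u, ‖c⁻¹.det‖ₑ ^ Fintype.card m * w (c⁻¹ * u) * Φ u := by
  have hc' : c⁻¹.det ≠ 0 := (Matrix.isUnit_nonsing_inv_det c hc.isUnit).ne_zero
  simp only [mul_assoc]
  rw [lintegral_const_mul' _ _ (by finiteness), ← enorm_det_pow_mul_lintegral_mul_left hc' _]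
  simp only [← Matrix.mul_assoc, Matrix.mul_nonsing_inv c hc.isUnit, Matrix.one_mul]

theorem quasiMeasurePreserving_mul_left {c : Matrix m m ℝ} (hc : c.det ≠ 0) :
    Measure.QuasiMeasurePreserving (fun g : Matrix m m ℝ => c * g) :=
  Measure.LinearMap.quasiMeasurePreserving (E := m → m → ℝ) volume
    (LinearMap.mulLeft ℝ c : Matrix m m ℝ →ₗ[ℝ] Matrix m m ℝ) (det_mulLeft_matrix_ne_zero hc)

theorem ae_matrix_det_ne_zero : ∀ᵐ g : Matrix m m ℝ, g.det ≠ 0 :=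
  ae_det_ne_zero (E := m → m → ℝ) volume (LinearMap.id : Matrix m m ℝ →ₗ[ℝ] Matrix m m ℝ) rfl

end MatrixMeasure

section FrobeniusBall

variable {m : Type*} [Fintype m]

/-- The closed unit ball of the Frobenius norm, which is invariant under the orthogonal group on
both sides. -/
def frobeniusBall (m : Type*) [Fintype m] : Set (Matrix m m ℝ) := {g | (g * gᵀ).trace ≤ 1}

theorem trace_mul_transpose_self (g : Matrix m m ℝ) : (g * gᵀ).trace = ∑ i, ∑ j, g i j ^ 2 := by
  simp [Matrix.trace, Matrix.mul_apply, sq]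

theorem isClosed_frobeniusBall : IsClosed (frobeniusBall m) :=
  isClosed_le (continuous_id.mul continuous_id.matrix_transpose).matrix_trace continuous_const

theorem isCompact_frobeniusBall : IsCompact (frobeniusBall m) := by
  refine (isCompact_closedBall (0 : m → m → ℝ) 1).of_isClosed_subset isClosed_frobeniusBall
    fun (g : Matrix m m ℝ) (hg : (g * gᵀ).trace ≤ 1) => ?_
  rw [trace_mul_transpose_self] at hg
  refine mem_closedBall_zero_iff.2 ((pi_norm_le_iff_of_nonneg zero_le_one).2 fun i =>
    (pi_norm_le_iff_of_nonneg zero_le_one).2 fun j => (sq_le_one_iff_abs_le_one _).1 ?_)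
  calc g i j ^ 2 ≤ ∑ j, g i j ^ 2 :=
        Finset.single_le_sum (f := fun j => g i j ^ 2) (fun _ _ => sq_nonneg _)
          (Finset.mem_univ j)
    _ ≤ ∑ i, ∑ j, g i j ^ 2 :=
        Finset.single_le_sum (f := fun i => ∑ j, g i j ^ 2)
          (fun _ _ => Finset.sum_nonneg fun _ _ => sq_nonneg _) (Finset.mem_univ i)
    _ ≤ 1 := hg

theorem volume_frobeniusBall_ne_zero : volume (frobeniusBall m) ≠ 0 := by
  have h_open : IsOpen {g : Matrix m m ℝ | (g * gᵀ).trace < 1} :=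
    isOpen_lt (continuous_id.mul continuous_id.matrix_transpose).matrix_trace continuous_const
  have h_pos := h_open.measure_pos volume ⟨0, by simp⟩
  exact (h_pos.trans_le (measure_mono fun g (hg : (g * gᵀ).trace < 1) => hg.le)).ne'

theorem isRightOrthInvariant_indicator_frobeniusBall [DecidableEq m] :
    IsRightOrthInvariant ((frobeniusBall m).indicator (1 : Matrix m m ℝ → ℝ≥0∞)) := by
  intro g k hk
  have h : g * k ∈ frobeniusBall m ↔ g ∈ frobeniusBall m := by
    simp only [frobeniusBall, Set.mem_ofPred_eq, isRightOrthInvariant_mul_transpose g k hk]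
  by_cases hg : g ∈ frobeniusBall m
  · rw [Set.indicator_of_mem hg, Set.indicator_of_mem (h.2 hg), Pi.one_apply, Pi.one_apply]
  · rw [Set.indicator_of_notMem hg, Set.indicator_of_notMem (mt h.1 hg)]

end FrobeniusBall

theorem lintegral_lintegral_mul_of_ae_const {α β : Type*} [MeasurableSpace α]
    [MeasurableSpace β] {μ : Measure α} {ν : Measure β} [SFinite μ] [SFinite ν]
    {K : α → β → ℝ≥0∞} {f δ : β → ℝ≥0∞} {c : ℝ≥0∞} (hf : AEMeasurable f ν)
    (hδ : AEMeasurable δ ν) (hK : AEMeasurable (Function.uncurry K) (μ.prod ν))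
    (hc : ∀ᵐ y ∂ν, δ y * ∫⁻ x, K x y ∂μ = c) :
    ∫⁻ x, ∫⁻ y, K x y * (f y * δ y) ∂ν ∂μ = c * ∫⁻ y, f y ∂ν := by
  rw [lintegral_lintegral_swap
      (hK.mul ((hf.mul hδ).comp_quasiMeasurePreserving Measure.quasiMeasurePreserving_snd)),
    ← lintegral_const_mul'' _ hf]
  refine lintegral_congr_ae ?_
  filter_upwards [hc, hK.aestronglyMeasurable.prodMk_right] with y hy hKy
  have hKy' : AEMeasurable (K · y) μ := hKy.aemeasurable
  rw [lintegral_mul_const'' _ hKy', ← hy]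
  ring

section BlockTriangularIntegration

variable {m : Type*} [Fintype m] [LinearOrder m] {ι : Type*} [LinearOrder ι] {b : m → ι}

variable (b) in
theorem ae_det_patternMatrix_ne_zero :
    ∀ᵐ x, (patternMatrix (blockLE b) x).det ≠ 0 :=
  ae_det_ne_zero volume (patternMatrix (blockLE b)) (e := patternRestrict _ 1) <|
    patternMatrix_patternRestrict fun _ _ hij => Matrix.one_apply_ne fun h => hij (h ▸ le_rfl)

variable (b) in
theorem quasiMeasurePreserving_patternMatrix_mul :
    Measure.QuasiMeasurePreserving
      fun q : PatternEntries (blockLE b) × Matrix m m ℝ => patternMatrix _ q.1 * q.2 :=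
  QuasiMeasurePreserving.prod_of_right
    (((LinearMap.continuous_of_finiteDimensional (patternMatrix (blockLE b))).comp
      continuous_fst).mul continuous_snd).measurable
    ((ae_det_patternMatrix_ne_zero b).mono fun _ hx => quasiMeasurePreserving_mul_left hx)

variable (b) in
theorem measurable_patternMatrix : Measurable (patternMatrix (blockLE b)) :=
  (LinearMap.continuous_of_finiteDimensional (patternMatrix (blockLE b))).measurable

variable (b) in
theorem measurable_enorm_det_inv_pow_mul {w : Matrix m m ℝ → ℝ≥0∞} (hw : Measurable w) :
    Measurable fun q : PatternEntries (blockLE b) × Matrix m m ℝ =>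
      ‖(patternMatrix _ q.1)⁻¹.det‖ₑ ^ Fintype.card m * w ((patternMatrix _ q.1)⁻¹ * q.2) := by
  have hB : Measurable fun q : PatternEntries (blockLE b) × Matrix m m ℝ =>
      (patternMatrix _ q.1)⁻¹ :=
    measurable_matrix_inv.comp ((measurable_patternMatrix b).comp measurable_fst)
  have h_det : Continuous fun g : Matrix m m ℝ => g.det := continuous_id.matrix_det
  have h_mul : Continuous fun p : Matrix m m ℝ × Matrix m m ℝ => p.1 * p.2 := continuous_mul
  exact ((h_det.measurable.comp hB).enorm.pow_const _).mul
    (hw.comp (h_mul.measurable.comp (hB.prodMk measurable_snd)))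

theorem lintegral_indicator_frobeniusBall_mul_strictFlagVolume_ne_top :
    ∫⁻ x, (frobeniusBall m).indicator 1 (patternMatrix (blockLE b) x) *
      ‖strictFlagVolume b (patternMatrix _ x)‖ₑ ≠ ∞ := by
  let B := patternMatrix (blockLE b)
  have hB : Topology.IsClosedEmbedding B :=
    LinearMap.isClosedEmbedding_of_injective (LinearMap.ker_eq_bot.2 patternMatrix_injective)
  have hK : IsCompact (B ⁻¹' frobeniusBall m) := hB.isCompact_preimage isCompact_frobeniusBall
  have hδ : Continuous fun x => strictFlagVolume b (B x) :=
    (continuous_strictFlagVolume b).comp hB.continuous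
  have h_eq : ∀ x, (frobeniusBall m).indicator 1 (B x) * ‖strictFlagVolume b (B x)‖ₑ =
      (B ⁻¹' frobeniusBall m).indicator (fun x => ‖strictFlagVolume b (B x)‖ₑ) x := fun x => by
    by_cases hx : B x ∈ frobeniusBall m
    · rw [Set.indicator_of_mem hx, Set.indicator_of_mem (s := B ⁻¹' _) hx, Pi.one_apply, one_mul]
    · rw [Set.indicator_of_notMem hx, Set.indicator_of_notMem (s := B ⁻¹' _) hx, zero_mul]
  rw [lintegral_congr h_eq, lintegral_indicator hK.measurableSet]
  exact (hδ.continuousOn.integrableOn_compact hK).hasFiniteIntegral.ne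

variable (b) in
theorem lintegral_strictFlagVolume_patternMatrix_ne_zero :
    ∫⁻ x, ‖strictFlagVolume b (patternMatrix (blockLE b) x)‖ₑ ≠ 0 := by
  have hδ : Measurable fun x => strictFlagVolume b (patternMatrix (blockLE b) x) :=
    (continuous_strictFlagVolume b).measurable.comp (measurable_patternMatrix b)
  rw [Ne, lintegral_eq_zero_iff hδ.enorm]
  intro h
  obtain ⟨x, hx, hx'⟩ := (h.and (ae_det_patternMatrix_ne_zero b)).exists
  exact (strictFlagVolume_pos b hx').ne' (enorm_eq_zero.1 hx)

variable [LocallyFiniteOrderBot m]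

theorem enorm_flagVolume_mul_lintegral (hb : Monotone b) {u : Matrix m m ℝ} (hu : u.det ≠ 0)
    {Φ : Matrix m m ℝ → ℝ≥0∞} (hΦ : IsRightOrthInvariant Φ) :
    ‖flagVolume b u‖ₑ * ∫⁻ x, Φ (patternMatrix (blockLE b) x * u) =
      ∫⁻ x, Φ (patternMatrix (blockLE b) x) := by
  obtain ⟨R, hR, k, hk, rfl⟩ := exists_blockLowerTriangular_mul_orthogonal hb hu
  have hRdet : R.det ≠ 0 := left_ne_zero_of_mul (Matrix.det_mul R k ▸ hu)
  have hdet : LinearMap.det (patternMulRight (blockLE b) R) ≠ 0 :=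
    abs_ne_zero.1 (abs_det_patternMulRight_blockLE hR ▸ (flagVolume_pos b hRdet).ne')
  simp only [← Matrix.mul_assoc, hΦ _ k hk, isRightOrthInvariant_flagVolume b R k hk]
  rw [← abs_det_patternMulRight_blockLE hR, Real.enorm_abs,
    ← enorm_det_mul_lintegral_comp_linearMap volume hdet fun x => Φ (patternMatrix _ x)]
  simp only [patternMatrix_patternMulRight_blockLE hR]

theorem enorm_strictFlagVolume_mul_lintegral_inv (hb : Monotone b) {u : Matrix m m ℝ}
    (hu : u.det ≠ 0) {w : Matrix m m ℝ → ℝ≥0∞} (hw : IsRightOrthInvariant w) :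
    ‖strictFlagVolume b u‖ₑ * ∫⁻ x, ‖(patternMatrix (blockLE b) x)⁻¹.det‖ₑ ^ Fintype.card m *
        w ((patternMatrix (blockLE b) x)⁻¹ * u) =
      ∫⁻ x, ‖(patternMatrix (blockLE b) x)⁻¹.det‖ₑ ^ Fintype.card m *
        w (patternMatrix (blockLE b) x)⁻¹ := by
  obtain ⟨R, hR, k, hk, rfl⟩ := exists_blockLowerTriangular_mul_orthogonal hb hu
  have hRdet : R.det ≠ 0 := left_ne_zero_of_mul (Matrix.det_mul R k ▸ hu)
  have h_mod := strictFlagVolume_mul_abs_det_patternMulLeft hR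
  have hdet : LinearMap.det (patternMulLeft (blockLE b) R) ≠ 0 :=
    abs_ne_zero.1 (right_ne_zero_of_mul (h_mod ▸ pow_ne_zero _ (abs_ne_zero.2 hRdet)))
  simp only [← Matrix.mul_assoc, hw _ k hk, isRightOrthInvariant_strictFlagVolume b R k hk]
  rw [← enorm_det_mul_lintegral_comp_linearMap volume hdet, ← mul_assoc,
    ← Real.enorm_abs (LinearMap.det _), ← enorm_mul, h_mod, enorm_pow, Real.enorm_abs,
    ← lintegral_const_mul' _ _ (by finiteness)]
  refine lintegral_congr fun x => ?_
  rw [patternMatrix_patternMulLeft_blockLE hR, Matrix.mul_inv_rev, Matrix.mul_assoc,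
    Matrix.nonsing_inv_mul R hRdet.isUnit, Matrix.mul_one, ← mul_assoc, ← mul_pow, ← enorm_mul,
    Matrix.det_mul, Matrix.det_nonsing_inv R, Ring.inverse_eq_inv', mul_left_comm,
    mul_inv_cancel₀ hRdet, mul_one]

/- A null set of matrices may contain all block triangular ones `B`, so we first translate them to
`B * u` for a generic `u = R * k`; right invariance removes `k` and a change of variables `R`. -/
theorem aemeasurable_comp_patternMatrix (hb : Monotone b) {F : Matrix m m ℝ → ℝ≥0∞}
    (hF : IsRightOrthInvariant F) (hFm : AEMeasurable F) :
    AEMeasurable fun x => F (patternMatrix (blockLE b) x) := by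
  have h_joint := hFm.comp_quasiMeasurePreserving (quasiMeasurePreserving_patternMatrix_mul b)
  obtain ⟨u, hu_meas, hu⟩ :=
    (h_joint.aestronglyMeasurable.prodMk_right.and ae_matrix_det_ne_zero).exists
  obtain ⟨R, hR, k, hk, rfl⟩ := exists_blockLowerTriangular_mul_orthogonal hb hu
  have hRdet : R.det ≠ 0 := left_ne_zero_of_mul (Matrix.det_mul R k ▸ hu)
  have hdet : LinearMap.det (patternMulRight (blockLE b) R) ≠ 0 :=
    abs_ne_zero.1 (abs_det_patternMulRight_blockLE hR ▸ (flagVolume_pos b hRdet).ne')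
  let e := LinearMap.equivOfDetNeZero _ hdet
  have h_translate : (fun x => F (patternMatrix (blockLE b) x)) =
      (fun x => F (patternMatrix (blockLE b) x * (R * k))) ∘ e.symm := by
    funext x
    rw [Function.comp_apply, ← Matrix.mul_assoc, hF _ k hk,
      ← patternMatrix_patternMulRight_blockLE hR]
    exact congrArg (fun y => F (patternMatrix _ y)) (e.apply_symm_apply x).symm
  rw [h_translate]
  exact hu_meas.aemeasurable.comp_quasiMeasurePreserving
    (quasiMeasurePreserving_linearEquiv volume volume e.symm)

theorem lintegral_patternMatrix_mul_lintegral (hb : Monotone b) {v Φ : Matrix m m ℝ → ℝ≥0∞}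
    (hv : Measurable v) (hΦ : IsRightOrthInvariant Φ) (hΦm : AEMeasurable Φ) :
    (∫⁻ x, Φ (patternMatrix (blockLE b) x)) * ∫⁻ u, v u =
      ∫⁻ x, ∫⁻ u, v u * ‖flagVolume b u‖ₑ * Φ (patternMatrix (blockLE b) x * u) := by
  simp only [mul_comm _ (Φ _)]
  exact (lintegral_lintegral_mul_of_ae_const (K := fun x u => Φ (patternMatrix _ x * u))
    hv.aemeasurable (continuous_flagVolume b).measurable.enorm.aemeasurable
    (hΦm.comp_quasiMeasurePreserving (quasiMeasurePreserving_patternMatrix_mul b))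
    (ae_matrix_det_ne_zero.mono fun _ hu => enorm_flagVolume_mul_lintegral hb hu hΦ)).symm

theorem lintegral_inv_mul_lintegral (hb : Monotone b) {w F : Matrix m m ℝ → ℝ≥0∞}
    (hw : IsRightOrthInvariant w) (hwm : Measurable w) (hFm : AEMeasurable F) :
    (∫⁻ x, ‖(patternMatrix (blockLE b) x)⁻¹.det‖ₑ ^ Fintype.card m *
        w (patternMatrix (blockLE b) x)⁻¹) * ∫⁻ u, F u =
      ∫⁻ x, ∫⁻ u, ‖(patternMatrix (blockLE b) x)⁻¹.det‖ₑ ^ Fintype.card m *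
        w ((patternMatrix (blockLE b) x)⁻¹ * u) * (F u * ‖strictFlagVolume b u‖ₑ) :=
  (lintegral_lintegral_mul_of_ae_const
    (K := fun x u => ‖(patternMatrix (blockLE b) x)⁻¹.det‖ₑ ^ Fintype.card m *
      w ((patternMatrix (blockLE b) x)⁻¹ * u)) hFm
    (continuous_strictFlagVolume b).measurable.enorm.aemeasurable
    (measurable_enorm_det_inv_pow_mul b hwm).aemeasurable
    (ae_matrix_det_ne_zero.mono fun _ hu =>
      enorm_strictFlagVolume_mul_lintegral_inv hb hu hw)).symm

/- Integrate `v u * ρ u * F (B u) * δ (B u)` over matrices `u` and block triangular `B`, where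
`ρ` and `δ` are the two flag volumes. The substitution `B ↦ B * R⁻¹`, where `u = R * k`, gives the
left side; `u ↦ B⁻¹ * u` followed by `B ↦ R * B` gives the right one. -/
theorem lintegral_patternMatrix_mul_strictFlagVolume (hb : Monotone b)
    {v F : Matrix m m ℝ → ℝ≥0∞} (hv : IsRightOrthInvariant v) (hvm : Measurable v)
    (hF : IsRightOrthInvariant F) (hFm : AEMeasurable F) :
    (∫⁻ x, F (patternMatrix (blockLE b) x) * ‖strictFlagVolume b (patternMatrix _ x)‖ₑ) *
        ∫⁻ u, v u =
      (∫⁻ x, ‖(patternMatrix (blockLE b) x)⁻¹.det‖ₑ ^ Fintype.card m *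
        (v (patternMatrix _ x)⁻¹ * ‖flagVolume b (patternMatrix _ x)⁻¹‖ₑ)) * ∫⁻ u, F u := by
  rw [lintegral_patternMatrix_mul_lintegral hb hvm
      (hF.mul_enorm (isRightOrthInvariant_strictFlagVolume b))
      (hFm.mul (continuous_strictFlagVolume b).measurable.enorm.aemeasurable),
    lintegral_inv_mul_lintegral hb (hv.mul_enorm (isRightOrthInvariant_flagVolume b))
      (hvm.mul (continuous_flagVolume b).measurable.enorm) hFm]
  exact lintegral_congr_ae ((ae_det_patternMatrix_ne_zero b).mono fun x hx =>
    lintegral_mul_comp_mul_left hx (fun g => v g * ‖flagVolume b g‖ₑ)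
      fun g => F g * ‖strictFlagVolume b g‖ₑ)

theorem exists_lintegral_patternMatrix_mul_strictFlagVolume_eq (hb : Monotone b) :
    ∃ C : ℝ≥0∞, C ≠ 0 ∧ C ≠ ∞ ∧ ∀ F : Matrix m m ℝ → ℝ≥0∞, IsRightOrthInvariant F →
      AEMeasurable F →
        ∫⁻ x, F (patternMatrix (blockLE b) x) * ‖strictFlagVolume b (patternMatrix _ x)‖ₑ =
          C * ∫⁻ u, F u := by
  -- Any invariant weight `v` yields a constant; `F = 1` and `F = v` show it is neither `0` nor `∞`.
  let v : Matrix m m ℝ → ℝ≥0∞ := (frobeniusBall m).indicator 1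
  have hvm : Measurable v := measurable_one.indicator isClosed_frobeniusBall.measurableSet
  have hV : ∫⁻ u, v u = volume (frobeniusBall m) :=
    lintegral_indicator_one isClosed_frobeniusBall.measurableSet
  have hV₀ : ∫⁻ u, v u ≠ 0 := hV ▸ volume_frobeniusBall_ne_zero
  have hV_top : ∫⁻ u, v u ≠ ∞ := hV ▸ isCompact_frobeniusBall.measure_ne_top
  have key := fun F => lintegral_patternMatrix_mul_strictFlagVolume (F := F) hb
    isRightOrthInvariant_indicator_frobeniusBall hvm
  set Q := ∫⁻ x, ‖(patternMatrix (blockLE b) x)⁻¹.det‖ₑ ^ Fintype.card m *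
    (v (patternMatrix _ x)⁻¹ * ‖flagVolume b (patternMatrix _ x)⁻¹‖ₑ)
  refine ⟨Q / ∫⁻ u, v u, ENNReal.div_ne_zero.2 ⟨fun hQ => ?_, hV_top⟩,
    ENNReal.div_ne_top (fun hQ => ?_) hV₀, fun F hF hFm => ?_⟩
  · have h := key 1 (fun _ _ _ => rfl) aemeasurable_one
    simp only [hQ, zero_mul, mul_eq_zero, Pi.one_apply, one_mul] at h
    exact h.elim (lintegral_strictFlagVolume_patternMatrix_ne_zero b) hV₀
  · have h := key v isRightOrthInvariant_indicator_frobeniusBall hvm.aemeasurable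
    rw [hQ, ENNReal.top_mul hV₀] at h
    exact ENNReal.mul_ne_top lintegral_indicator_frobeniusBall_mul_strictFlagVolume_ne_top hV_top h
  · rw [← ENNReal.mul_div_right_comm, ENNReal.eq_div_iff hV₀ hV_top, mul_comm, key F hF hFm]

end BlockTriangularIntegration

theorem quasiMeasurePreserving_prodMk_snd {α β γ : Type*} [MeasurableSpace α]
    [MeasurableSpace β] [MeasurableSpace γ] {μ : Measure α} {ν : Measure β} {τ : Measure γ}
    [SFinite μ] [SFinite ν] [SFinite τ] {f : α × β → γ} (hf : Measurable f)
    (h : ∀ᵐ y ∂ν, Measure.QuasiMeasurePreserving (fun x => f (x, y)) μ τ) :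
    Measure.QuasiMeasurePreserving (fun q => (f q, q.2)) (μ.prod ν) (τ.prod ν) := by
  have hf' : Measurable fun q : α × β => (f q, q.2) := hf.prodMk measurable_snd
  refine ⟨hf', Measure.AbsolutelyContinuous.mk fun s hs hs₀ => ?_⟩
  rw [Measure.prod_apply_symm hs, lintegral_eq_zero_iff (measurable_measure_prodMk_right hs)] at hs₀
  rw [Measure.map_apply hf' hs, Measure.prod_apply_symm (hf' hs)]
  refine lintegral_eq_zero_of_ae_eq_zero ?_
  filter_upwards [h, hs₀] with y hy hsy using hy.preimage_null hsy

section IwasawaCoordinates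

variable {m : Type*} [Fintype m] [LinearOrder m] {ι : Type*} [LinearOrder ι] {b : m → ι}

theorem det_toSquareBlockProp_unipotentMatrix (y : PatternEntries (blockLT b)) (p : m → Prop)
    [DecidablePred p] : ((unipotentMatrix y).toSquareBlockProp p).det = 1 := by
  have h_tri : ((unipotentMatrix y).toSquareBlockProp p).BlockTriangular
      (OrderDual.toDual ∘ b ∘ Subtype.val) := fun i j (hij : b i < b j) =>
    (unipotentMatrix_apply_of_ne y (ne_of_apply_ne b hij.ne)).trans
      (patternMatrix_apply_of_not y hij.not_gt)
  refine h_tri.det.trans (Finset.prod_eq_one fun a _ => ?_)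
  have h_one : ((unipotentMatrix y).toSquareBlockProp p).toSquareBlock
      (OrderDual.toDual ∘ b ∘ Subtype.val) a = 1 := by
    ext i j
    have hij : ¬ b j.1.1 < b i.1.1 := (OrderDual.toDual.injective (j.2.trans i.2.symm)).not_lt
    change unipotentMatrix y i.1.1 j.1.1 = _
    rw [unipotentMatrix, Matrix.add_apply, patternMatrix_apply_of_not y hij, add_zero,
      Matrix.one_apply, Matrix.one_apply]
    simp only [Subtype.ext_iff]
  rw [h_one, Matrix.det_one]

theorem rowVolume_unipotentMatrix_mul {p : m → Prop} [DecidablePred p]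
    (hp : ∀ i j, b j < b i → p i → p j) (y : PatternEntries (blockLT b)) (g : Matrix m m ℝ) :
    rowVolume p (unipotentMatrix y * g) = rowVolume p g := by
  rw [rowVolume_mul_of_lower fun i hi j hj => ?_, det_toSquareBlockProp_unipotentMatrix, abs_one,
    one_mul]
  rw [unipotentMatrix_apply_of_ne y (ne_of_mem_of_not_mem (s := {i | p i}) hi hj)]
  exact patternMatrix_apply_of_not y fun h => hj (hp i j h hi)

theorem strictFlagVolume_unipotentMatrix_mul (y : PatternEntries (blockLT b))
    (g : Matrix m m ℝ) : strictFlagVolume b (unipotentMatrix y * g) = strictFlagVolume b g :=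
  Finset.prod_congr rfl fun _ _ => rowVolume_unipotentMatrix_mul (fun _ _ => lt_trans) y g

theorem unipotentMatrix_mul_patternMatrix (y : PatternEntries (blockLT b))
    (z : PatternEntries (blockEQ b)) :
    unipotentMatrix y * patternMatrix _ z =
      patternMatrix _ (patternMulRight _ (patternMatrix _ z) y) + patternMatrix _ z := by
  rw [patternMatrix_patternMulRight_blockLT (blockTriangular_patternMatrix_blockEQ z),
    unipotentMatrix, add_mul, one_mul, add_comm]

variable (b) in
theorem ae_det_patternMatrix_blockEQ_ne_zero :
    ∀ᵐ z, (patternMatrix (blockEQ b) z).det ≠ 0 :=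
  ae_det_ne_zero volume (patternMatrix (blockEQ b)) (e := patternRestrict _ 1) <|
    patternMatrix_patternRestrict fun _ _ hij => Matrix.one_apply_ne fun h => hij (h ▸ rfl)

theorem lintegral_patternMatrix_add_mul_strictFlagVolume {z : PatternEntries (blockEQ b)}
    (hz : (patternMatrix _ z).det ≠ 0) (F : Matrix m m ℝ → ℝ≥0∞) :
    ∫⁻ y : PatternEntries (blockLT b), F (patternMatrix _ y + patternMatrix _ z) *
        ‖strictFlagVolume b (patternMatrix _ y + patternMatrix _ z)‖ₑ =
      ‖strictFlagVolume b (patternMatrix _ z)‖ₑ ^ 2 *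
        ∫⁻ y : PatternEntries (blockLT b), F (unipotentMatrix y * patternMatrix _ z) := by
  have h_abs := abs_det_patternMulRight_blockLT (blockTriangular_patternMatrix_blockEQ z)
  have hdet : LinearMap.det (patternMulRight (blockLT b) (patternMatrix _ z)) ≠ 0 :=
    abs_ne_zero.1 (h_abs ▸ (strictFlagVolume_pos b hz).ne')
  rw [← enorm_det_mul_lintegral_comp_linearMap volume hdet, ← Real.enorm_abs, h_abs, sq, mul_assoc]
  simp only [← unipotentMatrix_mul_patternMatrix, strictFlagVolume_unipotentMatrix_mul,
    mul_comm (F _)]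
  rw [lintegral_const_mul' _ _ enorm_ne_top]

variable (b) in
theorem quasiMeasurePreserving_patternMulRight_prodMk :
    Measure.QuasiMeasurePreserving
      fun q : PatternEntries (blockLT b) × PatternEntries (blockEQ b) =>
        (patternMulRight (blockLT b) (patternMatrix _ q.2) q.1, q.2) := by
  have h_cont {r : m → m → Prop} [DecidableRel r] : Continuous (patternMatrix r) :=
    LinearMap.continuous_of_finiteDimensional _
  refine quasiMeasurePreserving_prodMk_snd (Continuous.measurable ?_) ?_
  · exact (LinearMap.continuous_of_finiteDimensional (patternRestrict (blockLT b))).comp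
      ((h_cont.comp continuous_fst).mul (h_cont.comp continuous_snd))
  · refine (ae_det_patternMatrix_blockEQ_ne_zero b).mono fun z hz => ?_
    have hdet : LinearMap.det (patternMulRight (blockLT b) (patternMatrix _ z)) ≠ 0 :=
      abs_ne_zero.1 (abs_det_patternMulRight_blockLT (blockTriangular_patternMatrix_blockEQ z) ▸
        (strictFlagVolume_pos b hz).ne')
    exact quasiMeasurePreserving_linearEquiv volume volume (LinearMap.equivOfDetNeZero _ hdet)

variable [LocallyFiniteOrderBot m]

theorem aemeasurable_comp_patternMatrix_add (hb : Monotone b) {F : Matrix m m ℝ → ℝ≥0∞}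
    (hF : IsRightOrthInvariant F) (hFm : AEMeasurable F) :
    AEMeasurable fun q : PatternEntries (blockLT b) × PatternEntries (blockEQ b) =>
      F (patternMatrix _ q.1 + patternMatrix _ q.2) := by
  simp only [← patternMatrix_blockTriangularEquiv]
  exact (aemeasurable_comp_patternMatrix hb hF hFm).comp_quasiMeasurePreserving
    (quasiMeasurePreserving_linearEquiv volume volume (blockTriangularEquiv b))

theorem aemeasurable_comp_unipotentMatrix_mul (hb : Monotone b) {F : Matrix m m ℝ → ℝ≥0∞}
    (hF : IsRightOrthInvariant F) (hFm : AEMeasurable F) :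
    AEMeasurable fun q : PatternEntries (blockLT b) × PatternEntries (blockEQ b) =>
      F (unipotentMatrix q.1 * patternMatrix _ q.2) := by
  simp only [unipotentMatrix_mul_patternMatrix]
  exact (aemeasurable_comp_patternMatrix_add hb hF hFm).comp_quasiMeasurePreserving
    (quasiMeasurePreserving_patternMulRight_prodMk b)

theorem exists_lintegral_unipotentMatrix_mul_eq (hb : Monotone b) :
    ∃ C : ℝ≥0∞, C ≠ 0 ∧ C ≠ ∞ ∧ ∀ F : Matrix m m ℝ → ℝ≥0∞, IsRightOrthInvariant F →
      AEMeasurable F →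
        ∫⁻ z : PatternEntries (blockEQ b), ‖strictFlagVolume b (patternMatrix _ z)‖ₑ ^ 2 *
            ∫⁻ y : PatternEntries (blockLT b), F (unipotentMatrix y * patternMatrix _ z) =
          C * ∫⁻ u, F u := by
  obtain ⟨C, hC₀, hC, h⟩ := exists_lintegral_patternMatrix_mul_strictFlagVolume_eq hb
  obtain ⟨κ, hκ₀, hκ, h_split⟩ :=
    exists_lintegral_comp_linearEquiv_eq_mul volume volume (blockTriangularEquiv b)
  refine ⟨κ * C, mul_ne_zero hκ₀ hC₀, ENNReal.mul_ne_top hκ hC, fun F hF hFm => ?_⟩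
  rw [mul_assoc, ← h F hF hFm, ← h_split]
  simp only [patternMatrix_blockTriangularEquiv]
  rw [Measure.volume_eq_prod, lintegral_prod_symm _ (aemeasurable_comp_patternMatrix_add hb
    (hF.mul_enorm (isRightOrthInvariant_strictFlagVolume b))
    (hFm.mul (continuous_strictFlagVolume b).measurable.enorm.aemeasurable))]
  exact lintegral_congr_ae ((ae_det_patternMatrix_blockEQ_ne_zero b).mono fun z hz =>
    (lintegral_patternMatrix_add_mul_strictFlagVolume hz F).symm)

end IwasawaCoordinates

section BlockDiagonal

variable {m : Type*} [Fintype m] [DecidableEq m] {ι : Type*} [Fintype ι] [LinearOrder ι]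
  {b : m → ι}

theorem det_toSquareBlockProp_of_blockTriangular {R : Type*} [CommRing R] {M : Matrix m m R}
    (hM : M.BlockTriangular b) (q : ι → Prop) [DecidablePred q] :
    (M.toSquareBlockProp fun i => q (b i)).det = ∏ a with q a, (M.toSquareBlock b a).det := by
  have h_tri : (M.toSquareBlockProp fun i => q (b i)).BlockTriangular (b ∘ Subtype.val) :=
    hM.submatrix
  rw [h_tri.det_fintype, Finset.prod_filter]
  refine Finset.prod_congr rfl fun a _ => ?_
  split_ifs with ha
  · let e : {i : {i // q (b i)} // b i.1 = a} ≃ {i // b i = a} :=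
      Equiv.subtypeSubtypeEquivSubtype (p := fun i => q (b i)) fun {i} (h : b i = a) => h.symm ▸ ha
    exact Matrix.det_submatrix_equiv_self e (M.toSquareBlock b a)
  · have : IsEmpty {i : {i // q (b i)} // (b ∘ Subtype.val) i = a} :=
      ⟨fun i => ha (i.2 ▸ i.1.2)⟩
    exact Matrix.det_isEmpty

theorem rowVolume_of_blockDiagonal {A : Matrix m m ℝ} (hA : ∀ i j, b i ≠ b j → A i j = 0)
    (q : ι → Prop) [DecidablePred q] :
    rowVolume (fun i => q (b i)) A = ∏ a with q a, |(A.toSquareBlock b a).det| := by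
  rw [rowVolume_of_lower fun i hi j hj => hA i j fun h => hj (h ▸ hi),
    det_toSquareBlockProp_of_blockTriangular (fun i j hij => hA i j hij.ne'), Finset.abs_prod]

end BlockDiagonal

section PairBlocks

variable {n : ℕ}

/-- The row index `i` of a matrix of size `2n` as the pair of its `2 × 2` block and its position
inside this block. -/
def pairEquiv (n : ℕ) : Fin (2 * n) ≃ Fin n × Fin 2 :=
  (finCongr (mul_comm 2 n)).trans finProdFinEquiv.symm

/-- The `2 × 2` block containing a given row of a matrix of size `2n`. -/
def pairBlock (i : Fin (2 * n)) : Fin n := (pairEquiv n i).1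

theorem monotone_pairBlock : Monotone (pairBlock : Fin (2 * n) → Fin n) := fun _ _ hij =>
  Nat.div_le_div_right (c := 2) hij

@[simp]
theorem pairBlock_pairEquiv_symm (q : Fin n × Fin 2) : pairBlock ((pairEquiv n).symm q) = q.1 :=
  congrArg Prod.fst ((pairEquiv n).apply_symm_apply q)

theorem pairEquiv_symm_of_pairBlock_eq {i j : Fin (2 * n)} (h : pairBlock i = pairBlock j) :
    (pairEquiv n).symm (pairBlock i, (pairEquiv n j).2) = j :=
  (pairEquiv n).symm_apply_eq.2 (Prod.ext h rfl)

/-- The entries of the strictly lower `2 × 2` blocks, listed block by block or as one family. -/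
def pairEntriesLT : ({ij : Fin n × Fin n // ij.2 < ij.1} → Fin 2 → Fin 2 → ℝ) ≃ₗ[ℝ]
    PatternEntries (blockLT (pairBlock : Fin (2 * n) → Fin n)) where
  toFun c p := c ⟨(pairBlock p.1.1, pairBlock p.1.2), p.2⟩
    (pairEquiv n p.1.1).2 (pairEquiv n p.1.2).2
  map_add' _ _ := rfl
  map_smul' _ _ := rfl
  invFun x a u v := x ⟨((pairEquiv n).symm (a.1.1, u), (pairEquiv n).symm (a.1.2, v)), by
    simpa using a.2⟩
  left_inv c := by
    ext a u v
    simp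
  right_inv x := by
    ext p
    exact congrArg x (Subtype.ext (Prod.ext (pairEquiv_symm_of_pairBlock_eq rfl)
      (pairEquiv_symm_of_pairBlock_eq rfl)))

/-- The entries of the diagonal `2 × 2` blocks, listed block by block or as one family. -/
def pairEntriesEQ : (Fin n → Fin 2 → Fin 2 → ℝ) ≃ₗ[ℝ]
    PatternEntries (blockEQ (pairBlock : Fin (2 * n) → Fin n)) where
  toFun zc p := zc (pairBlock p.1.1) (pairEquiv n p.1.1).2 (pairEquiv n p.1.2).2
  map_add' _ _ := rfl
  map_smul' _ _ := rfl
  invFun x a u v := x ⟨((pairEquiv n).symm (a, u), (pairEquiv n).symm (a, v)), by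
    simp [blockEQ]⟩
  left_inv zc := by
    ext a u v
    simp
  right_inv x := by
    ext p
    exact congrArg x (Subtype.ext (Prod.ext (pairEquiv_symm_of_pairBlock_eq rfl)
      (pairEquiv_symm_of_pairBlock_eq p.2.symm)))

theorem unipotentMatrix_pairEntriesLT
    (c : {ij : Fin n × Fin n // ij.2 < ij.1} → Fin 2 → Fin 2 → ℝ) :
    unipotentMatrix (pairEntriesLT c) = Tmat c := by
  ext i j
  have h_one : (1 : Matrix (Fin (2 * n)) (Fin (2 * n)) ℝ) i j =
      if i.val / 2 = j.val / 2 then (if i.val % 2 = j.val % 2 then 1 else 0) else 0 := by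
    rw [Matrix.one_apply, ← ite_and]
    exact if_congr ⟨fun h => h ▸ ⟨rfl, rfl⟩, fun h => Fin.ext (by omega)⟩ rfl rfl
  rw [unipotentMatrix, Matrix.add_apply, h_one, patternMatrix_apply, Tmat, Matrix.of_apply]
  by_cases h : j.val / 2 < i.val / 2
  · rw [dif_pos h, dif_pos (show blockLT pairBlock i j from h), if_neg h.ne', zero_add]
    rfl
  · rw [dif_neg h, dif_neg (show ¬ blockLT pairBlock i j from h), add_zero]

theorem patternMatrix_pairEntriesEQ (zc : Fin n → Fin 2 → Fin 2 → ℝ) :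
    patternMatrix _ (pairEntriesEQ zc) = Zmat zc := by
  ext i j
  by_cases h : i.val / 2 = j.val / 2
  · rw [patternMatrix_apply, dif_pos (show blockEQ pairBlock i j from Fin.ext h.symm), Zmat,
      Matrix.of_apply, if_pos h]
    rfl
  · rw [patternMatrix_apply, dif_neg (fun h' => h (congrArg Fin.val h').symm), Zmat,
      Matrix.of_apply, if_neg h]

theorem Zmat_apply_of_ne (zc : Fin n → Fin 2 → Fin 2 → ℝ) {i j : Fin (2 * n)}
    (h : pairBlock i ≠ pairBlock j) : Zmat zc i j = 0 :=
  if_neg fun h' => h (Fin.ext h')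

theorem det_toSquareBlock_Zmat (zc : Fin n → Fin 2 → Fin 2 → ℝ) (a : Fin n) :
    ((Zmat zc).toSquareBlock pairBlock a).det = (Matrix.of (zc a)).det := by
  let e : Fin 2 ≃ {i : Fin (2 * n) // pairBlock i = a} :=
    { toFun u := ⟨(pairEquiv n).symm (a, u), by simp⟩
      invFun i := (pairEquiv n i.1).2
      left_inv u := by simp
      right_inv i := by
        obtain ⟨i, rfl⟩ := i
        exact Subtype.ext (pairEquiv_symm_of_pairBlock_eq rfl) }
  rw [← Matrix.det_submatrix_equiv_self e, ← patternMatrix_pairEntriesEQ]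
  congr 1
  ext u v
  have h : pairBlock (e v).1 = pairBlock (e u).1 := (e v).2.trans (e u).2.symm
  refine (dif_pos h).trans ?_
  change zc (pairBlock (e u).1) (e.symm (e u)) (e.symm (e v)) = zc a u v
  rw [(e u).2, e.symm_apply_apply, e.symm_apply_apply]

theorem rowVolume_Zmat (zc : Fin n → Fin 2 → Fin 2 → ℝ) (q : Fin n → Prop) [DecidablePred q] :
    rowVolume (fun i => q (pairBlock i)) (Zmat zc) = ∏ a with q a, |(Matrix.of (zc a)).det| := by
  simp only [rowVolume_of_blockDiagonal (fun _ _ => Zmat_apply_of_ne zc), det_toSquareBlock_Zmat]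

theorem det_Zmat (zc : Fin n → Fin 2 → Fin 2 → ℝ) :
    (Zmat zc).det = ∏ a, (Matrix.of (zc a)).det := by
  have h_tri : (Zmat zc).BlockTriangular pairBlock := fun i j hij => Zmat_apply_of_ne zc hij.ne'
  simp only [h_tri.det_fintype, det_toSquareBlock_Zmat]

theorem strictFlagVolume_Zmat (zc : Fin n → Fin 2 → Fin 2 → ℝ) :
    strictFlagVolume pairBlock (Zmat zc) =
      ∏ a : Fin n, (Matrix.of (zc a) * (Matrix.of (zc a))ᵀ).det ^ (n - 1 - a.val) := by
  calc strictFlagVolume pairBlock (Zmat zc)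
      = ∏ i : Fin (2 * n), ∏ a with a < pairBlock i, |(Matrix.of (zc a)).det| :=
        Finset.prod_congr rfl fun i _ => rowVolume_Zmat zc (· < pairBlock i)
    _ = ∏ q : Fin n × Fin 2, ∏ a with a < q.1, |(Matrix.of (zc a)).det| :=
        (pairEquiv n).prod_comp fun q => ∏ a with a < q.1, |(Matrix.of (zc a)).det|
    _ = ∏ j : Fin n, ∏ a with a < j, |(Matrix.of (zc a)).det| ^ 2 := by
        simp only [Fintype.prod_prod_type, Finset.prod_const, Finset.card_univ, Fintype.card_fin,
          Finset.prod_pow]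
    _ = ∏ a : Fin n, ∏ _j ∈ Finset.Ioi a, |(Matrix.of (zc a)).det| ^ 2 :=
        Finset.prod_comm' fun _ _ => by simp
    _ = _ := by
        simp only [Finset.prod_const, Fin.card_Ioi, sq_abs, Matrix.det_mul, Matrix.det_transpose,
          ← sq]

end PairBlocks

section PairIwasawa

variable {n : ℕ} {F : Matrix (Fin (2 * n)) (Fin (2 * n)) ℝ → ℝ≥0∞}

theorem aemeasurable_comp_Tmat_mul_Zmat (hF : IsRightOrthInvariant F) (hFm : AEMeasurable F) :
    AEMeasurable fun q : ({ij : Fin n × Fin n // ij.2 < ij.1} → Fin 2 → Fin 2 → ℝ) ×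
      (Fin n → Fin 2 → Fin 2 → ℝ) => F (Tmat q.1 * Zmat q.2) := by
  simp only [← unipotentMatrix_pairEntriesLT, ← patternMatrix_pairEntriesEQ]
  have h := aemeasurable_comp_unipotentMatrix_mul monotone_pairBlock hF hFm
  exact AEMeasurable.comp_quasiMeasurePreserving
    (f := Prod.map (pairEntriesLT (n := n)) (pairEntriesEQ (n := n))) h
    (QuasiMeasurePreserving.prodMap
      (quasiMeasurePreserving_linearEquiv volume volume pairEntriesLT)
      (quasiMeasurePreserving_linearEquiv volume volume pairEntriesEQ))

theorem ae_aemeasurable_comp_Tmat_mul (hF : IsRightOrthInvariant F) (hFm : AEMeasurable F) :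
    ∀ᵐ zc : Fin n → Fin 2 → Fin 2 → ℝ, AEMeasurable fun c => F (Tmat c * Zmat zc) :=
  (aemeasurable_comp_Tmat_mul_Zmat hF hFm).aestronglyMeasurable.prodMk_right.mono
    fun _ h => h.aemeasurable

theorem aemeasurable_lintegral_comp_Tmat_mul (hF : IsRightOrthInvariant F)
    (hFm : AEMeasurable F) :
    AEMeasurable fun zc : Fin n → Fin 2 → Fin 2 → ℝ => ∫⁻ c, F (Tmat c * Zmat zc) :=
  (aemeasurable_comp_Tmat_mul_Zmat hF hFm).lintegral_prod_left'

theorem measurable_Zmat : Measurable fun zc : Fin n → Fin 2 → Fin 2 → ℝ => Zmat zc := by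
  simp only [← patternMatrix_pairEntriesEQ]
  exact (LinearMap.continuous_of_finiteDimensional
    (patternMatrix _ ∘ₗ pairEntriesEQ.toLinearMap)).measurable

theorem ae_det_ne_zero_of_blocks :
    ∀ᵐ zc : Fin n → Fin 2 → Fin 2 → ℝ, ∀ a, (Matrix.of (zc a)).det ≠ 0 := by
  filter_upwards [(quasiMeasurePreserving_linearEquiv volume volume pairEntriesEQ).ae
    (ae_det_patternMatrix_blockEQ_ne_zero (pairBlock : Fin (2 * n) → Fin n))] with zc hzc
  rw [patternMatrix_pairEntriesEQ, det_Zmat] at hzc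
  exact fun a => Finset.prod_ne_zero_iff.1 hzc a (Finset.mem_univ a)

theorem exists_lintegral_Tmat_mul_Zmat_eq (n : ℕ) :
    ∃ C : ℝ≥0∞, C ≠ 0 ∧ C ≠ ∞ ∧ ∀ F : Matrix (Fin (2 * n)) (Fin (2 * n)) ℝ → ℝ≥0∞,
      IsRightOrthInvariant F → AEMeasurable F →
        ∫⁻ zc, ‖strictFlagVolume pairBlock (Zmat zc)‖ₑ ^ 2 * ∫⁻ c, F (Tmat c * Zmat zc) =
          C * ∫⁻ u, F u := by
  obtain ⟨C, hC₀, hC, h⟩ :=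
    exists_lintegral_unipotentMatrix_mul_eq (monotone_pairBlock (n := n))
  obtain ⟨κ, hκ₀, hκ, h_lower⟩ :=
    exists_lintegral_comp_linearEquiv_eq_mul volume volume (pairEntriesLT (n := n))
  obtain ⟨τ, hτ₀, hτ, h_diag⟩ :=
    exists_lintegral_comp_linearEquiv_eq_mul volume volume (pairEntriesEQ (n := n))
  refine ⟨κ * τ * C, mul_ne_zero (mul_ne_zero hκ₀ hτ₀) hC₀,
    ENNReal.mul_ne_top (ENNReal.mul_ne_top hκ hτ) hC, fun F hF hFm => ?_⟩
  rw [mul_assoc, ← h F hF hFm, mul_assoc, ← h_diag]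
  simp only [← unipotentMatrix_pairEntriesLT, ← patternMatrix_pairEntriesEQ]
  rw [← lintegral_const_mul' _ _ hκ]
  refine lintegral_congr fun zc => ?_
  rw [mul_left_comm, ← h_lower]

end PairIwasawa

namespace IsFactorizing

variable {n : ℕ} {P : Matrix (Fin (2 * n)) (Fin (2 * n)) ℝ → ℝ}
  {σw : Matrix (Fin 2) (Fin 2) ℝ → ℝ} (hfac : IsFactorizing n P σw)
include hfac

theorem isRightOrthInvariant : IsRightOrthInvariant P := fun g k hk => by
  simpa using hfac.invariant g 1 (one_mem _) k hk

theorem comp_orthogonal_mul {k : Matrix (Fin (2 * n)) (Fin (2 * n)) ℝ}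
    (hk : k ∈ Matrix.orthogonalGroup (Fin (2 * n)) ℝ)
    (g : Matrix (Fin (2 * n)) (Fin (2 * n)) ℝ) : P (k * g) = P g := by
  simpa using hfac.invariant g k hk 1 (one_mem _)

theorem aemeasurable_ofReal : AEMeasurable fun g => ENNReal.ofReal (P g) :=
  hfac.integrable.aemeasurable.ennreal_ofReal

theorem isRightOrthInvariant_ofReal : IsRightOrthInvariant fun g => ENNReal.ofReal (P g) :=
  fun g k hk => congrArg ENNReal.ofReal (hfac.isRightOrthInvariant g k hk)

theorem lintegral_ofReal_ne_top : ∫⁻ g, ENNReal.ofReal (P g) ≠ ∞ :=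
  hfac.integrable.lintegral_lt_top.ne

theorem ae_lintegral_ne_top : ∀ᵐ zc : Fin n → Fin 2 → Fin 2 → ℝ,
    ∫⁻ c, ENNReal.ofReal (P (Tmat c * Zmat zc)) ≠ ∞ := by
  obtain ⟨C, -, hC, h⟩ := exists_lintegral_Tmat_mul_Zmat_eq n
  have hfin := h _ hfac.isRightOrthInvariant_ofReal hfac.aemeasurable_ofReal
  have hmeas := ((continuous_strictFlagVolume pairBlock).measurable.comp
    (measurable_Zmat (n := n))).enorm.pow_const 2
  filter_upwards [ae_det_ne_zero_of_blocks, ae_lt_top' (hmeas.aemeasurable.mul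
    (aemeasurable_lintegral_comp_Tmat_mul hfac.isRightOrthInvariant_ofReal
      hfac.aemeasurable_ofReal))
    (hfin.trans_ne (ENNReal.mul_ne_top hC hfac.lintegral_ofReal_ne_top))] with zc hz hlt htop
  have hdet : (Zmat zc).det ≠ 0 := by
    rw [det_Zmat]
    exact Finset.prod_ne_zero_iff.2 fun a _ => hz a
  refine hlt.ne (ENNReal.mul_eq_top.2 (Or.inl ⟨pow_ne_zero 2 ?_, htop⟩))
  exact enorm_ne_zero.2 (strictFlagVolume_pos _ hdet).ne'

theorem ae_ofReal_integral_eq_lintegral : ∀ᵐ zc : Fin n → Fin 2 → Fin 2 → ℝ,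
    ENNReal.ofReal (∫ c, P (Tmat c * Zmat zc)) =
      ∫⁻ c, ENNReal.ofReal (P (Tmat c * Zmat zc)) := by
  filter_upwards [hfac.ae_lintegral_ne_top, ae_aemeasurable_comp_Tmat_mul
    hfac.isRightOrthInvariant_ofReal hfac.aemeasurable_ofReal] with zc hfin hmeas
  rw [← ENNReal.ofReal_toReal hfin, ← integral_toReal hmeas (.of_forall fun _ =>
    ENNReal.ofReal_lt_top)]
  simp only [ENNReal.toReal_ofReal (hfac.nonneg _)]

end IsFactorizing

/-- The density of the Iwasawa diagonal of a factorizing ensemble with weight `σw`, up to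
normalization: its factors are the weight and the part of the Jacobian carried by each block. -/
def diagonalDensity {n : ℕ} (σw : Matrix (Fin 2) (Fin 2) ℝ → ℝ)
    (zc : Fin n → Fin 2 → Fin 2 → ℝ) : ℝ :=
  ∏ j, σw (Matrix.of (zc j)) * (Matrix.of (zc j) * (Matrix.of (zc j))ᵀ).det ^ (n - 1 - j.val)

section WeightedLaws

variable {α E : Type*} [MeasurableSpace α] {μ : Measure α} [NormedAddCommGroup E]
  [NormedSpace ℝ E] [MeasurableSpace E] [BorelSpace E] [SecondCountableTopology E] {p : α → ℝ}
  {φ : α → E}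

theorem integrable_id_map_withDensity_ofReal_iff (hp : ∀ x, 0 ≤ p x)
    (hpm : AEMeasurable (fun x => ENNReal.ofReal (p x)) μ) (hφ : Measurable φ) :
    Integrable id ((μ.withDensity fun x => ENNReal.ofReal (p x)).map φ) ↔
      Integrable (fun x => p x • φ x) μ := by
  rw [integrable_map_measure aestronglyMeasurable_id hφ.aemeasurable, Function.id_comp,
    integrable_withDensity_iff_integrable_smul₀' hpm (.of_forall fun _ => ENNReal.ofReal_lt_top)]
  simp only [ENNReal.toReal_ofReal (hp _)]

theorem integral_id_map_withDensity_ofReal (hp : ∀ x, 0 ≤ p x)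
    (hpm : AEMeasurable (fun x => ENNReal.ofReal (p x)) μ) (hφ : Measurable φ) :
    ∫ t, id t ∂(μ.withDensity fun x => ENNReal.ofReal (p x)).map φ = ∫ x, p x • φ x ∂μ := by
  rw [integral_map hφ.aemeasurable aestronglyMeasurable_id,
    integral_withDensity_eq_integral_toReal_smul₀ hpm
      (.of_forall fun _ => ENNReal.ofReal_lt_top)]
  simp only [ENNReal.toReal_ofReal (hp _), id]

end WeightedLaws

theorem diagonalDensity_eq_prod_rpow {n : ℕ} (σw : Matrix (Fin 2) (Fin 2) ℝ → ℝ)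
    (zc : Fin n → Fin 2 → Fin 2 → ℝ) :
    diagonalDensity σw zc = ∏ j : Fin n, σw (Matrix.of (zc j)) *
      |(Matrix.of (zc j)).det| ^ (2 * ((n : ℝ) - 1 - j)) := by
  refine Finset.prod_congr rfl fun j _ => ?_
  have hj : 2 * ((n : ℝ) - 1 - j) = ((2 * (n - 1 - j.val) : ℕ) : ℝ) := by
    rw [Nat.sub_sub, Nat.cast_mul, Nat.cast_sub (by omega)]
    push_cast
    ring
  rw [hj, Real.rpow_natCast, pow_mul, sq_abs, sq, Matrix.det_mul, Matrix.det_transpose]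

theorem integral_diagonalDensity {n : ℕ} (σw : Matrix (Fin 2) (Fin 2) ℝ → ℝ) :
    ∫ zc : Fin n → Fin 2 → Fin 2 → ℝ, diagonalDensity σw zc =
      ∏ j : Fin n, mSigR σw (2 * ((j : ℕ) + 1 : ℝ) - 1) := by
  simp only [diagonalDensity_eq_prod_rpow]
  rw [integral_fintype_prod_volume_eq_prod (𝕜 := ℝ) fun (j : Fin n) (z : Fin 2 → Fin 2 → ℝ) =>
    σw (Matrix.of z) * |(Matrix.of z).det| ^ (2 * ((n : ℝ) - 1 - j)), ← Equiv.prod_comp Fin.revPerm]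
  refine Finset.prod_congr rfl fun j _ => ?_
  have h_rev : 2 * ((n : ℝ) - 1 - (Fin.revPerm j).val) = 2 * ((j : ℕ) + 1 : ℝ) - 1 - 1 := by
    rw [Fin.revPerm_apply, Fin.val_rev, Nat.cast_sub (by omega)]
    push_cast
    ring
  rw [mSigR, h_rev]

namespace IsFactorizing

variable {n : ℕ} {P : Matrix (Fin (2 * n)) (Fin (2 * n)) ℝ → ℝ}
  {σw : Matrix (Fin 2) (Fin 2) ℝ → ℝ} (hfac : IsFactorizing n P σw)
include hfac

theorem diagonalDensity_nonneg (zc : Fin n → Fin 2 → Fin 2 → ℝ) : 0 ≤ diagonalDensity σw zc := by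
  refine Finset.prod_nonneg fun j _ => mul_nonneg (hfac.wnonneg _) (pow_nonneg ?_ _)
  rw [Matrix.det_mul, Matrix.det_transpose]
  exact mul_self_nonneg _

theorem ae_ofReal_diagonalDensity_eq : ∀ᵐ zc : Fin n → Fin 2 → Fin 2 → ℝ,
    ENNReal.ofReal (diagonalDensity σw zc) = ‖strictFlagVolume pairBlock (Zmat zc)‖ₑ ^ 2 *
      ∫⁻ c, ENNReal.ofReal (P (Tmat c * Zmat zc)) := by
  filter_upwards [hfac.factor, hfac.ae_ofReal_integral_eq_lintegral] with zc hzc hint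
  rw [diagonalDensity, Finset.prod_mul_distrib, ← hzc, ← strictFlagVolume_Zmat, ← hint,
    mul_right_comm, ← sq, ENNReal.ofReal_mul (sq_nonneg _), ← enorm_pow,
    Real.enorm_of_nonneg (sq_nonneg _)]

theorem aemeasurable_ofReal_diagonalDensity :
    AEMeasurable fun zc : Fin n → Fin 2 → Fin 2 → ℝ => ENNReal.ofReal (diagonalDensity σw zc) :=
  ((((continuous_strictFlagVolume pairBlock).measurable.comp
    measurable_Zmat).enorm.pow_const 2).aemeasurable.mul (aemeasurable_lintegral_comp_Tmat_mul
      hfac.isRightOrthInvariant_ofReal hfac.aemeasurable_ofReal)).congr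
    (Filter.EventuallyEq.symm hfac.ae_ofReal_diagonalDensity_eq)

theorem exists_lintegral_mul_diagonalDensity_eq : ∃ C : ℝ≥0∞, C ≠ 0 ∧ C ≠ ∞ ∧
    ∀ F : Matrix (Fin (2 * n)) (Fin (2 * n)) ℝ → ℝ≥0∞,
      Measurable F → IsRightOrthInvariant F → (∀ c g, F (Tmat c * g) = F g) →
        ∫⁻ zc, ENNReal.ofReal (diagonalDensity σw zc) * F (Zmat zc) =
          C * ∫⁻ g, ENNReal.ofReal (P g) * F g := by
  obtain ⟨C, hC₀, hC, h⟩ := exists_lintegral_Tmat_mul_Zmat_eq n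
  refine ⟨C, hC₀, hC, fun F hFm hF_right hF_left => ?_⟩
  rw [← h (fun g => ENNReal.ofReal (P g) * F g)
    (fun g k hk => by simp only [hF_right g k hk, hfac.isRightOrthInvariant g k hk])
    (hfac.aemeasurable_ofReal.mul hFm.aemeasurable)]
  refine lintegral_congr_ae ?_
  filter_upwards [hfac.ae_ofReal_diagonalDensity_eq, ae_aemeasurable_comp_Tmat_mul
    hfac.isRightOrthInvariant_ofReal hfac.aemeasurable_ofReal] with zc hzc hmeas
  simp only [hF_left, hzc]
  rw [lintegral_mul_const'' _ hmeas, mul_assoc]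

/- Complex integrands cannot be fed to the Iwasawa formula, which concerns the Lebesgue integral
of `ℝ≥0∞`-valued functions; comparing the laws of `φ` on the two sides covers them. -/
theorem exists_map_withDensity_eq : ∃ C : ℝ≥0∞, C ≠ 0 ∧ C ≠ ∞ ∧
    ∀ φ : Matrix (Fin (2 * n)) (Fin (2 * n)) ℝ → ℂ,
      Measurable φ → IsRightOrthInvariant φ → (∀ c g, φ (Tmat c * g) = φ g) →
        (volume.withDensity fun zc => ENNReal.ofReal (diagonalDensity σw zc)).map
            (fun zc => φ (Zmat zc)) =
          C • (volume.withDensity fun g => ENNReal.ofReal (P g)).map φ := by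
  obtain ⟨C, hC₀, hC, h⟩ := hfac.exists_lintegral_mul_diagonalDensity_eq
  refine ⟨C, hC₀, hC, fun φ hφ hφ_right hφ_left => Measure.ext_of_lintegral _ fun f hf => ?_⟩
  have hφZ : Measurable fun zc : Fin n → Fin 2 → Fin 2 → ℝ => φ (Zmat zc) :=
    hφ.comp measurable_Zmat
  rw [lintegral_map hf hφZ, lintegral_smul_measure, lintegral_map hf hφ,
    lintegral_withDensity_eq_lintegral_mul₀ hfac.aemeasurable_ofReal_diagonalDensity
      (g := fun zc => f (φ (Zmat zc))) (hf.comp hφZ).aemeasurable,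
    lintegral_withDensity_eq_lintegral_mul₀ hfac.aemeasurable_ofReal
      (g := fun g => f (φ g)) (hf.comp hφ).aemeasurable]
  exact h (fun g => f (φ g)) (hf.comp hφ) (fun g k hk => congrArg f (hφ_right g k hk))
    fun c g => congrArg f (hφ_left c g)

theorem exists_smul_integral_eq : ∃ c : ℝ, c ≠ 0 ∧
    ∀ φ : Matrix (Fin (2 * n)) (Fin (2 * n)) ℝ → ℂ,
      Measurable φ → IsRightOrthInvariant φ → (∀ c g, φ (Tmat c * g) = φ g) →
        (Integrable (fun g => P g • φ g) ↔
          Integrable fun zc => diagonalDensity σw zc • φ (Zmat zc)) ∧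
        c • ∫ g, P g • φ g = ∫ zc, diagonalDensity σw zc • φ (Zmat zc) := by
  obtain ⟨C, hC₀, hC, h⟩ := hfac.exists_map_withDensity_eq
  refine ⟨C.toReal, ENNReal.toReal_ne_zero.2 ⟨hC₀, hC⟩, fun φ hφ hφ_right hφ_left => ?_⟩
  have hφZ : Measurable fun zc : Fin n → Fin 2 → Fin 2 → ℝ => φ (Zmat zc) :=
    hφ.comp measurable_Zmat
  constructor
  · rw [← integrable_id_map_withDensity_ofReal_iff hfac.nonneg hfac.aemeasurable_ofReal hφ,
      ← integrable_id_map_withDensity_ofReal_iff hfac.diagonalDensity_nonneg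
        hfac.aemeasurable_ofReal_diagonalDensity hφZ,
      h φ hφ hφ_right hφ_left, integrable_smul_measure hC₀ hC]
  · rw [← integral_id_map_withDensity_ofReal hfac.nonneg hfac.aemeasurable_ofReal hφ,
      ← integral_id_map_withDensity_ofReal hfac.diagonalDensity_nonneg
        hfac.aemeasurable_ofReal_diagonalDensity hφZ,
      h φ hφ hφ_right hφ_left, integral_smul_measure]

theorem eq_prod_mSigR_of_smul_integral_eq {c : ℝ}
    (hc : c • ∫ g, P g • (1 : ℂ) =
      ∫ zc : Fin n → Fin 2 → Fin 2 → ℝ, diagonalDensity σw zc • (1 : ℂ)) :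
    c = ∏ j : Fin n, mSigR σw (2 * ((j : ℕ) + 1 : ℝ) - 1) := by
  rw [integral_smul_const, integral_smul_const, integral_diagonalDensity,
    show ∫ g, P g = 1 from hfac.prob, one_smul] at hc
  exact smul_left_injective ℝ one_ne_zero hc

theorem prod_mSigR_ne_zero : ∏ j : Fin n, mSigR σw (2 * ((j : ℕ) + 1 : ℝ) - 1) ≠ 0 := by
  obtain ⟨c, hc, h⟩ := hfac.exists_smul_integral_eq
  rwa [← hfac.eq_prod_mSigR_of_smul_integral_eq
    (h 1 measurable_one (fun _ _ _ => rfl) fun _ _ => rfl).2]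

variable {φ : Matrix (Fin (2 * n)) (Fin (2 * n)) ℝ → ℂ} (hφ : Measurable φ)
  (hφ_right : IsRightOrthInvariant φ) (hφ_left : ∀ c g, φ (Tmat c * g) = φ g)
include hφ hφ_right hφ_left

theorem integrable_smul_iff : Integrable (fun g => P g • φ g) ↔
    Integrable fun zc => diagonalDensity σw zc • φ (Zmat zc) := by
  obtain ⟨c, -, h⟩ := hfac.exists_smul_integral_eq
  exact (h φ hφ hφ_right hφ_left).1

theorem prod_mSigR_smul_integral :
    (∏ j : Fin n, mSigR σw (2 * ((j : ℕ) + 1 : ℝ) - 1)) • ∫ g, P g • φ g =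
      ∫ zc, diagonalDensity σw zc • φ (Zmat zc) := by
  obtain ⟨c, -, h⟩ := hfac.exists_smul_integral_eq
  rw [← hfac.eq_prod_mSigR_of_smul_integral_eq
    (h 1 measurable_one (fun _ _ _ => rfl) fun _ _ => rfl).2]
  exact (h φ hφ hφ_right hφ_left).2

end IsFactorizing

section ComplexPowers

theorem cpw_of_pos {t : ℝ} (ht : 0 < t) (w : ℂ) : cpw t w = Complex.exp (w * Real.log t) :=
  if_neg ht.ne'

theorem measurable_cpw (w : ℂ) : Measurable fun t : ℝ => cpw t w :=
  Measurable.ite (measurableSet_singleton 0) measurable_const (by fun_prop)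

theorem norm_cpw_le {t : ℝ} (ht : 0 ≤ t) (w : ℂ) : ‖cpw t w‖ ≤ t ^ w.re := by
  rcases ht.eq_or_lt with rfl | ht
  · simpa [cpw] using Real.rpow_nonneg le_rfl w.re
  · rw [cpw_of_pos ht, Complex.norm_exp, Complex.re_mul_ofReal, mul_comm, ← Real.rpow_def_of_pos ht]

theorem cpw_rpow {t : ℝ} (ht : 0 < t) (r : ℝ) (w : ℂ) : cpw (t ^ r) w = cpw t (r * w) := by
  rw [cpw_of_pos (Real.rpow_pos_of_pos ht r), cpw_of_pos ht, Real.log_rpow ht]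
  push_cast
  ring_nf

theorem ofReal_rpow_eq_cpw {t : ℝ} (ht : 0 < t) (r : ℝ) : ((t ^ r : ℝ) : ℂ) = cpw t r := by
  rw [cpw_of_pos ht, Real.rpow_def_of_pos ht, mul_comm]
  push_cast
  rfl

theorem cpw_add {t : ℝ} (ht : 0 < t) (w w' : ℂ) : cpw t (w + w') = cpw t w * cpw t w' := by
  simp only [cpw_of_pos ht, add_mul, Complex.exp_add]

theorem cpw_sum {ι : Type*} {t : ℝ} (ht : 0 < t) (S : Finset ι) (w : ι → ℂ) :
    cpw t (∑ i ∈ S, w i) = ∏ i ∈ S, cpw t (w i) := by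
  simp only [cpw_of_pos ht, Finset.sum_mul, Complex.exp_sum]

theorem cpw_prod {ι : Type*} {x : ι → ℝ} (hx : ∀ i, 0 < x i) (S : Finset ι) (w : ℂ) :
    cpw (∏ i ∈ S, x i) w = ∏ i ∈ S, cpw (x i) w := by
  simp only [cpw_of_pos (Finset.prod_pos fun i _ => hx i), cpw_of_pos (hx _),
    Real.log_prod fun i _ => (hx i).ne', Complex.ofReal_sum, Finset.mul_sum, Complex.exp_sum]

theorem prod_cpw_prod_le_sq {n : ℕ} {x : Fin n → ℝ} (hx : ∀ a, 0 < x a) (e : Fin n → ℂ) :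
    ∏ j, cpw ((∏ a with a ≤ j, x a) ^ 2) (e j) =
      ∏ a, cpw (x a) (∑ j ∈ Finset.Ici a, 2 * e j) := by
  have h_sq (j : Fin n) : cpw ((∏ a with a ≤ j, x a) ^ 2) (e j) =
      ∏ a with a ≤ j, cpw (x a) (2 * e j) := by
    rw [← Real.rpow_two, cpw_rpow (Finset.prod_pos fun a _ => hx a), cpw_prod hx]
    rfl
  simp only [h_sq, cpw_sum (hx _)]
  exact Finset.prod_comm' (by simp)

end ComplexPowers

theorem sum_Ici_two_mul_expo {n : ℕ} (s : Fin n → ℂ) (a : Fin n) :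
    ∑ j ∈ Finset.Ici a, 2 * expo n s j = s a + n + 1 - 2 * (n - a) := by
  let S : ℕ → ℂ := fun i => (if h : i < n then s ⟨i, h⟩ else -(n : ℂ) - 1) + 2 * i
  have h_expo (j : Fin n) : 2 * expo n s j = -S (j + 1) - -S j := by
    simp only [S, expo, j.isLt, dif_pos]
    push_cast
    ring
  calc ∑ j ∈ Finset.Ici a, 2 * expo n s j
      = ∑ i ∈ Finset.Ico (a : ℕ) n, (-S (i + 1) - -S i) := by
        rw [← Fin.map_valEmbedding_Ici, Finset.sum_map]
        exact Finset.sum_congr rfl fun j _ => h_expo j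
    _ = -S n - -S a := Finset.sum_Ico_sub (fun i => -S i) a.isLt.le
    _ = s a + n + 1 - 2 * (n - a) := by
        simp only [S, a.isLt, lt_irrefl, dif_pos, dif_neg, not_false_eq_true]
        ring

section SphericalPower

variable {n : ℕ}

theorem rowVolume_true_sq {m : Type*} [Fintype m] [DecidableEq m] (g : Matrix m m ℝ) :
    rowVolume (fun _ => True) g ^ 2 = (g * gᵀ).det := by
  rw [rowVolume_sq]
  exact Matrix.det_submatrix_equiv_self (Equiv.subtypeUnivEquiv fun _ => trivial) _

theorem rowVolume_pairBlock_le_sq (j : Fin n) (h : 2 * (j.val + 1) ≤ 2 * n)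
    (g : Matrix (Fin (2 * n)) (Fin (2 * n)) ℝ) :
    rowVolume (fun i => pairBlock i ≤ j) g ^ 2 =
      ((g * gᵀ).submatrix (Fin.castLE h) (Fin.castLE h)).det := by
  have h_iff (i : Fin (2 * n)) : i.val < 2 * (j.val + 1) ↔ pairBlock i ≤ j := by
    change _ ↔ i.val / 2 ≤ j.val
    omega
  rw [rowVolume_sq, ← Matrix.det_submatrix_equiv_self
    ((Fin.castLEquiv h).trans (Equiv.subtypeEquivRight h_iff))]
  rfl

/-- The integrand of the spherical transform at `g gᵀ`: the power function of `sphInt` before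
averaging over the orthogonal group, with the factor `det (g gᵀ) ^ (-(2 n - 1) / 2)`. -/
def sphericalPower (s : Fin n → ℂ) (g : Matrix (Fin (2 * n)) (Fin (2 * n)) ℝ) : ℂ :=
  (((g * gᵀ).det ^ (-(2 * (n : ℝ) - 1) / 2) : ℝ) : ℂ) *
    ∏ j : Fin n, cpw ((g * gᵀ).submatrix (Fin.castLE (by have := j.isLt; omega :
      2 * (j.val + 1) ≤ 2 * n)) (Fin.castLE (by have := j.isLt; omega))).det (expo n s j)

theorem sphericalPower_eq_rowVolume (s : Fin n → ℂ)
    (g : Matrix (Fin (2 * n)) (Fin (2 * n)) ℝ) :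
    sphericalPower s g =
      (((rowVolume (fun _ => True) g ^ 2) ^ (-(2 * (n : ℝ) - 1) / 2) : ℝ) : ℂ) *
        ∏ j, cpw (rowVolume (fun i => pairBlock i ≤ j) g ^ 2) (expo n s j) := by
  rw [rowVolume_true_sq, sphericalPower]
  exact congrArg _ (Finset.prod_congr rfl fun j _ => by rw [rowVolume_pairBlock_le_sq])

theorem measurable_sphericalPower (s : Fin n → ℂ) : Measurable (sphericalPower s) := by
  rw [funext (sphericalPower_eq_rowVolume s)]
  have h_vol (p : Fin (2 * n) → Prop) [DecidablePred p] : Measurable (rowVolume p) :=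
    continuous_rowVolume.measurable
  exact (Complex.measurable_ofReal.comp (((h_vol _).pow_const 2).pow_const _)).mul
    (Finset.measurable_fun_prod _ fun j _ => (measurable_cpw _).comp ((h_vol _).pow_const 2))

theorem isRightOrthInvariant_sphericalPower (s : Fin n → ℂ) :
    IsRightOrthInvariant (sphericalPower s) := fun g k hk => by
  simp only [sphericalPower_eq_rowVolume, isRightOrthInvariant_rowVolume g k hk]

theorem sphericalPower_Tmat_mul (s : Fin n → ℂ)
    (c : {ij : Fin n × Fin n // ij.2 < ij.1} → Fin 2 → Fin 2 → ℝ)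
    (g : Matrix (Fin (2 * n)) (Fin (2 * n)) ℝ) :
    sphericalPower s (Tmat c * g) = sphericalPower s g := by
  simp only [sphericalPower_eq_rowVolume, ← unipotentMatrix_pairEntriesLT]
  rw [rowVolume_unipotentMatrix_mul fun _ _ _ _ => trivial]
  simp only [rowVolume_unipotentMatrix_mul fun _ _ hij hi => hij.le.trans hi]

theorem diagonalDensity_smul_sphericalPower_Zmat (σw : Matrix (Fin 2) (Fin 2) ℝ → ℝ)
    (s : Fin n → ℂ) {zc : Fin n → Fin 2 → Fin 2 → ℝ} (hz : ∀ a, (Matrix.of (zc a)).det ≠ 0) :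
    diagonalDensity σw zc • sphericalPower s (Zmat zc) =
      ∏ j, (σw (Matrix.of (zc j)) : ℂ) * cpw |(Matrix.of (zc j)).det| (s j - n) := by
  have hx (a : Fin n) : 0 < |(Matrix.of (zc a)).det| := abs_pos.2 (hz a)
  have h_prod : 0 < ∏ a, |(Matrix.of (zc a)).det| := Finset.prod_pos fun a _ => hx a
  have h_le (j : Fin n) : rowVolume (fun i => pairBlock i ≤ j) (Zmat zc) =
      ∏ a with a ≤ j, |(Matrix.of (zc a)).det| := rowVolume_Zmat zc fun a => a ≤ j
  simp only [sphericalPower_eq_rowVolume, h_le]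
  rw [rowVolume_Zmat (q := fun _ => True), Finset.filter_true, prod_cpw_prod_le_sq hx,
    diagonalDensity_eq_prod_rpow, ofReal_rpow_eq_cpw (pow_pos h_prod 2), ← Real.rpow_two,
    cpw_rpow h_prod, cpw_prod hx, Complex.real_smul, Complex.ofReal_prod,
    ← Finset.prod_mul_distrib, ← Finset.prod_mul_distrib]
  refine Finset.prod_congr rfl fun a _ => ?_
  rw [Complex.ofReal_mul, ofReal_rpow_eq_cpw (hx a), sum_Ici_two_mul_expo, mul_assoc,
    ← cpw_add (hx a), ← cpw_add (hx a)]
  congr 2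
  push_cast
  ring

end SphericalPower

theorem integrable_mul_cpw {α : Type*} [MeasurableSpace α] {μ : Measure α} {f t : α → ℝ} {w : ℂ}
    (ht : Measurable t) (ht₀ : ∀ x, 0 ≤ t x) (h : Integrable (fun x => f x * t x ^ w.re) μ) :
    Integrable (fun x => (f x : ℂ) * cpw (t x) w) μ := by
  have h_phase : AEStronglyMeasurable (fun x => cpw (t x) w / ((t x ^ w.re : ℝ) : ℂ)) μ :=
    (((measurable_cpw w).comp ht).div
      (Complex.measurable_ofReal.comp (ht.pow_const w.re))).aestronglyMeasurable
  refine (h.ofReal.mul_bdd (c := 1) h_phase (.of_forall fun x => ?_)).congr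
    (.of_forall fun x => ?_)
  · rw [norm_div, Complex.norm_of_nonneg (Real.rpow_nonneg (ht₀ x) _)]
    exact div_le_one_of_le₀ (norm_cpw_le (ht₀ x) w) (Real.rpow_nonneg (ht₀ x) _)
  · rcases (ht₀ x).eq_or_lt with hx | hx
    · simp [cpw, ← hx]
    · have : ((t x ^ w.re : ℝ) : ℂ) ≠ 0 := Complex.ofReal_ne_zero.2 (Real.rpow_pos_of_pos hx _).ne'
      change ((f x * t x ^ w.re : ℝ) : ℂ) * _ = _
      rw [Complex.ofReal_mul, mul_assoc, mul_div_cancel₀ _ this]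

section DiagonalIntegral

variable {n : ℕ} (σw : Matrix (Fin 2) (Fin 2) ℝ → ℝ) (s : Fin n → ℂ)

theorem ae_diagonalDensity_smul_sphericalPower_Zmat :
    (fun zc => diagonalDensity σw zc • sphericalPower s (Zmat zc)) =ᵐ[volume]
      fun zc => ∏ j, (σw (Matrix.of (zc j)) : ℂ) * cpw |(Matrix.of (zc j)).det| (s j - n) :=
  ae_det_ne_zero_of_blocks.mono fun _ => diagonalDensity_smul_sphericalPower_Zmat σw s

variable {σw s} in
theorem integrable_diagonalDensity_smul_sphericalPower (hsint : ∀ j : Fin n, Integrable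
    (fun z : Fin 2 → Fin 2 → ℝ => σw (Matrix.of z) * |(Matrix.of z).det| ^ ((s j).re - (n : ℝ)))) :
    Integrable fun zc => diagonalDensity σw zc • sphericalPower s (Zmat zc) := by
  have h_factor (j : Fin n) : Integrable fun z : Fin 2 → Fin 2 → ℝ =>
      (σw (Matrix.of z) : ℂ) * cpw |(Matrix.of z).det| (s j - n) := by
    refine integrable_mul_cpw ?_ (fun _ => abs_nonneg _) (by simpa using hsint j)
    exact (continuous_id (X := Matrix (Fin 2) (Fin 2) ℝ)).matrix_det.abs.measurable
  exact (Integrable.fintype_prod h_factor).congr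
    (ae_diagonalDensity_smul_sphericalPower_Zmat σw s).symm

theorem integral_diagonalDensity_smul_sphericalPower :
    ∫ zc, diagonalDensity σw zc • sphericalPower s (Zmat zc) =
      ∏ j, mSigC σw (s j - (n : ℂ) + 1) := by
  rw [integral_congr_ae (ae_diagonalDensity_smul_sphericalPower_Zmat σw s),
    integral_fintype_prod_volume_eq_prod fun (j : Fin n) (z : Fin 2 → Fin 2 → ℝ) =>
      (σw (Matrix.of z) : ℂ) * cpw |(Matrix.of z).det| (s j - n)]
  simp only [mSigC, add_sub_cancel_right]

end DiagonalIntegral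

section OrthogonalAverage

variable {m : Type*} [Fintype m] [DecidableEq m]

theorem abs_det_of_mem_orthogonalGroup {k : Matrix m m ℝ} (hk : k ∈ Matrix.orthogonalGroup m ℝ) :
    |k.det| = 1 := by
  simpa using isRightOrthInvariant_abs_det 1 k hk

theorem measurePreserving_orthogonal_mul {k : Matrix m m ℝ}
    (hk : k ∈ Matrix.orthogonalGroup m ℝ) :
    MeasurePreserving (fun g : Matrix m m ℝ => k * g) := by
  have h_abs := abs_det_of_mem_orthogonalGroup hk
  have hdet : k.det ≠ 0 := abs_ne_zero.1 (h_abs ▸ one_ne_zero)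
  have hmeas := (quasiMeasurePreserving_mul_left hdet).measurable
  refine ⟨hmeas, Measure.ext_of_lintegral _ fun F hF => ?_⟩
  rw [lintegral_map hF hmeas, ← enorm_det_pow_mul_lintegral_mul_left hdet F, ← Real.enorm_abs,
    h_abs, enorm_one, one_pow, one_mul]

theorem integral_integral_orthogonal_mul (μ : Measure (Matrix.orthogonalGroup m ℝ))
    [IsProbabilityMeasure μ] {E : Type*} [NormedAddCommGroup E] [NormedSpace ℝ E]
    [CompleteSpace E] {G : Matrix m m ℝ → E} (hG : Integrable G) :
    ∫ u, ∫ k, G (k.1 * u) ∂μ = ∫ u, G u := by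
  have h_skew : MeasurePreserving
      (fun q : Matrix.orthogonalGroup m ℝ × Matrix m m ℝ => (q.1, q.1.1 * q.2))
      (μ.prod volume) (μ.prod volume) := by
    refine (MeasurePreserving.id μ).skew_product (g := fun k u => k.1 * u) ?_
      (.of_forall fun k => (measurePreserving_orthogonal_mul k.2).map_eq)
    exact (measurable_subtype_coe.comp measurable_fst).mul measurable_snd
  have h_int : Integrable (fun q : Matrix m m ℝ × Matrix.orthogonalGroup m ℝ => G (q.2.1 * q.1))
      (volume.prod μ) :=
    (h_skew.integrable_comp_of_integrable (hG.comp_snd μ)).swap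
  have h_inner (k : Matrix.orthogonalGroup m ℝ) : ∫ u, G (k.1 * u) = ∫ u, G u := by
    have hk := measurePreserving_orthogonal_mul k.2
    rw [← integral_map hk.aemeasurable (hk.map_eq.symm ▸ hG.aestronglyMeasurable), hk.map_eq]
  rw [integral_integral_swap h_int]
  simp only [h_inner, integral_const, probReal_univ, one_smul]

end OrthogonalAverage

theorem sphericalPower_orthogonal_mul {n : ℕ} (s : Fin n → ℂ)
    (k : OG (2 * n)) (g : Matrix (Fin (2 * n)) (Fin (2 * n)) ℝ) :
    sphericalPower s (k.1 * g) = (((g * gᵀ).det ^ (-(2 * (n : ℝ) - 1) / 2) : ℝ) : ℂ) *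
      ∏ j : Fin n, cpw ((k.1 * (g * gᵀ) * k.1ᵀ).submatrix (Fin.castLE (by have := j.isLt; omega :
        2 * (j.val + 1) ≤ 2 * n)) (Fin.castLE (by have := j.isLt; omega))).det (expo n s j) := by
  have h_conj : k.1 * g * (k.1 * g)ᵀ = k.1 * (g * gᵀ) * k.1ᵀ := by
    rw [Matrix.transpose_mul]
    simp only [Matrix.mul_assoc]
  have h_det : (k.1 * (g * gᵀ) * k.1ᵀ).det = (g * gᵀ).det := by
    rw [Matrix.det_mul, Matrix.det_mul, Matrix.det_transpose, mul_right_comm, ← sq, ← sq_abs,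
      abs_det_of_mem_orthogonalGroup k.2, one_pow, one_mul]
  rw [sphericalPower, h_conj, h_det]

theorem IsFactorizing.integral_smul_sphericalPower_orthogonal_mul {n : ℕ}
    {P : Matrix (Fin (2 * n)) (Fin (2 * n)) ℝ → ℝ} {σw : Matrix (Fin 2) (Fin 2) ℝ → ℝ}
    (hfac : IsFactorizing n P σw) (μ : Measure (OG (2 * n))) (s : Fin n → ℂ)
    (g : Matrix (Fin (2 * n)) (Fin (2 * n)) ℝ) :
    ∫ k, P (k.1 * g) • sphericalPower s (k.1 * g) ∂μ =
      ((P g * (g * gᵀ).det ^ (-(2 * (n : ℝ) - 1) / 2) : ℝ) : ℂ) * sphInt n μ s (g * gᵀ) := by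
  simp only [hfac.comp_orthogonal_mul (Subtype.prop _), sphericalPower_orthogonal_mul,
    integral_const_mul, sphInt, Complex.real_smul, Complex.ofReal_mul, mul_assoc]

theorem spherical_transform_factorizing_general (n : ℕ) (μ : Measure (OG (2 * n)))
    [IsProbabilityMeasure μ] (P : Matrix (Fin (2 * n)) (Fin (2 * n)) ℝ → ℝ)
    (σw : Matrix (Fin 2) (Fin 2) ℝ → ℝ) (hfac : IsFactorizing n P σw) (s : Fin n → ℂ)
    (hsint : ∀ j : Fin n, Integrable (fun z : Fin 2 → Fin 2 → ℝ =>
      σw (Matrix.of z) * |(Matrix.of z).det| ^ ((s j).re - (n : ℝ)))) :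
    (∫ u in {u : Fin (2 * n) → Fin (2 * n) → ℝ | IsUnit (Matrix.of u)},
        ((P (Matrix.of u) *
            ((Matrix.of u * (Matrix.of u)ᵀ).det) ^ (-(2 * (n : ℝ) - 1) / 2) : ℝ) : ℂ) *
          sphInt n μ s (Matrix.of u * (Matrix.of u)ᵀ)) =
      ∏ j : Fin n,
        mSigC σw (s j - (n : ℂ) + 1) / (mSigR σw (2 * ((j : ℕ) + 1 : ℝ) - 1) : ℂ) := by
  have h_inv := isRightOrthInvariant_sphericalPower s
  have h_meas := measurable_sphericalPower s
  have h_int : Integrable fun g => P g • sphericalPower s g :=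
    (hfac.integrable_smul_iff h_meas h_inv (sphericalPower_Tmat_mul s)).2
      (integrable_diagonalDensity_smul_sphericalPower hsint)
  have h_iwasawa := hfac.prod_mSigR_smul_integral h_meas h_inv (sphericalPower_Tmat_mul s)
  rw [integral_diagonalDensity_smul_sphericalPower, Complex.real_smul, Complex.ofReal_prod]
    at h_iwasawa
  have h_unit : ∀ᵐ u : Fin (2 * n) → Fin (2 * n) → ℝ,
      u ∈ {u : Fin (2 * n) → Fin (2 * n) → ℝ | IsUnit (Matrix.of u)} :=
    ae_matrix_det_ne_zero.mono fun u hu => (Matrix.isUnit_iff_isUnit_det u).2 hu.isUnit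
  rw [Measure.restrict_eq_self_of_ae_mem h_unit, Finset.prod_div_distrib, ← h_iwasawa,
    mul_div_cancel_left₀ _ (by exact_mod_cast hfac.prod_mSigR_ne_zero),
    ← integral_integral_orthogonal_mul μ h_int]
  exact integral_congr_ae (.of_forall fun u =>
    (hfac.integral_smul_sphericalPower_orthogonal_mul μ s (Matrix.of u)).symm)

/-- Proposition 3.1(2): the spherical transform `S_Ψ` of a
factorizing ensemble is `∏_j m_σ(s_j - n + 1)/m_σ(2j - 1)`. -/
theorem spherical_transform_factorizing (n : ℕ) (hn : 1 ≤ n)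
    (μ : Measure (OG (2 * n))) (hμ : μ.IsHaarMeasure) (hμ1 : IsProbabilityMeasure μ)
    (P : Matrix (Fin (2 * n)) (Fin (2 * n)) ℝ → ℝ)
    (σw : Matrix (Fin 2) (Fin 2) ℝ → ℝ) (hfac : IsFactorizing n P σw)
    (s : Fin n → ℂ)
    (hsint : ∀ j : Fin n, Integrable (fun z : Fin 2 → Fin 2 → ℝ =>
      σw (Matrix.of z) * |(Matrix.of z).det| ^ ((s j).re - (n : ℝ))))
    (hmint : ∀ j : Fin n, Integrable (fun z : Fin 2 → Fin 2 → ℝ =>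
      σw (Matrix.of z) * |(Matrix.of z).det| ^ (2 * ((j : ℕ) + 1 : ℝ) - 1 - 1)))
    (hmpos : ∀ j : Fin n, 0 < mSigR σw (2 * ((j : ℕ) + 1 : ℝ) - 1)) :
    (∫ u in {u : Fin (2 * n) → Fin (2 * n) → ℝ | IsUnit (Matrix.of u)},
        ((P (Matrix.of u) *
            ((Matrix.of u * (Matrix.of u)ᵀ).det) ^ (-(2 * (n : ℝ) - 1) / 2) : ℝ) : ℂ) *
          sphInt n μ s (Matrix.of u * (Matrix.of u)ᵀ)) =
      ∏ j : Fin n,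
        mSigC σw (s j - (n : ℂ) + 1) / (mSigR σw (2 * ((j : ℕ) + 1 : ℝ) - 1) : ℂ) :=
  spherical_transform_factorizing_general n μ P σw hfac s hsint

end
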